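/- arXiv:1609.02765 — 3 statements merged into one kernel-verified Lean document; each statement's English description precedes it below -/
import Mathlib

section
/- Let X be the n×n generic matrix over a field K and for 1 ≤ k ≤ n let I_k be the ideal of R = K[x_{ij}] generated by all k×k minors of X whose column set is {1, 2, ..., k} (i.e., minors [a_1,...,a_k | 1,...,k] for 1 ≤ a_1 < ... < a_k ≤ n). Then the height of I_k is at least n − k + 1; in fact the n − k + 1 minors [i, i+1, ..., i+k−1 | 1, ..., k] for i = 1, ..., n−k+1 form a regular sequence in R. -/
open MvPolynomial Matrix

/-- The height of an ideal: the infimum, over prime ideals `P` containing `I`,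
of the height of `P` in the poset of prime ideals. -/
noncomputable def idealHeight {R : Type*} [CommRing R] (I : Ideal R) : ℕ∞ :=
  ⨅ (P : PrimeSpectrum R) (_ : I ≤ P.asIdeal), Order.height P

/-!
For the lexicographic order in which the variables are read row by row, the leading term of a minor
is the product of its diagonal entries. The diagonals of the consecutive minors are pairwise
disjoint, so these minors are monic with pairwise coprime leading terms, and therefore form a
Gröbner basis. Let `J` be the ideal generated by the first few of them and `f` the next one. If
`f * g ∈ J` and `r` is the remainder of `g` modulo `J`, then `f * r ∈ J`; were `r` nonzero, one of
the leading terms of the generators of `J` would divide that of `f * r` and hence, being coprime to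
that of `f`, that of `r`, which is absurd. Thus each minor is regular modulo the preceding ones, and
each raises the height by at least one.
-/

open RingTheory.Sequence
open scoped MonomialOrder

section Groebner

variable {σ R : Type*} [CommRing R] {m : MonomialOrder σ}

/-- A Gröbner basis of the ideal generated by `B`: the leading monomial of every nonzero element of
the ideal is divisible by that of some `b ∈ B`. Leading coefficients are required to be `1` so that
division by `B` works over an arbitrary commutative ring. -/
structure IsMonicGroebnerBasis (m : MonomialOrder σ) (B : Set (MvPolynomial σ R)) : Prop where
  monic : ∀ b ∈ B, m.Monic b
  exists_degree_le : ∀ h ∈ Ideal.span B, h ≠ 0 → ∃ b ∈ B, m.degree b ≤ m.degree h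

lemma le_of_le_add_of_disjoint {a b c : σ →₀ ℕ} (h : a ≤ b + c) (hab : Disjoint a b) : a ≤ c := by
  intro s
  have hs : min (a s) (b s) = 0 := DFunLike.congr_fun (disjoint_iff.1 hab) s
  have := h s
  simp only [Finsupp.add_apply] at this
  omega

lemma degree_mul_of_monic {f g : MvPolynomial σ R} (hf : m.Monic f) (hg : g ≠ 0) :
    m.degree (f * g) = m.degree f + m.degree g :=
  m.degree_mul_of_isRegular_left (hf.leadingCoeff_eq_one ▸ isRegular_one) hg

lemma mul_ne_zero_of_monic {f g : MvPolynomial σ R} (hf : m.Monic f) (hg : g ≠ 0) :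
    f * g ≠ 0 := by
  have : f ∈ nonZeroDivisors (MvPolynomial σ R) :=
    m.mem_nonZeroDivisors_of_leadingCoeff_mem_nonZeroDivisors
      (hf.leadingCoeff_eq_one ▸ one_mem _)
  exact fun h => hg (this.1 g h)

lemma not_degree_le_degree_mul {b f r : MvPolynomial σ R} (hf : m.Monic f) (hr : r ≠ 0)
    (hbf : Disjoint (m.degree b) (m.degree f)) (hbr : ¬ m.degree b ≤ m.degree r) :
    ¬ m.degree b ≤ m.degree (f * r) := by
  rw [degree_mul_of_monic hf hr]
  exact fun h => hbr (le_of_le_add_of_disjoint h hbf)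

lemma exists_sub_mem_span_of_monic {B : Set (MvPolynomial σ R)} (hB : ∀ b ∈ B, m.Monic b)
    (g : MvPolynomial σ R) :
    ∃ r, g - r ∈ Ideal.span B ∧ (r ≠ 0 → ∀ b ∈ B, ¬ m.degree b ≤ m.degree r) := by
  obtain ⟨q, r, hg, -, hr⟩ := m.div_set
    (fun b hb => (hB b hb).leadingCoeff_eq_one ▸ isUnit_one) g
  refine ⟨r, ?_, fun hr0 => hr _ (m.degree_mem_support hr0)⟩
  rw [hg, add_sub_cancel_right, Finsupp.linearCombination_apply]
  exact Ideal.sum_mem _ fun b _ => Ideal.mul_mem_left _ _ (Ideal.subset_span b.2)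

lemma degree_add_eq_or_eq_of_ne {f g : MvPolynomial σ R} (h : m.degree f ≠ m.degree g) :
    m.degree (f + g) = m.degree f ∨ m.degree (f + g) = m.degree g := by
  rcases lt_or_gt_of_ne (m.toSyn.injective.ne h) with hlt | hgt
  · exact .inr (m.degree_add_eq_right_of_lt hlt)
  · exact .inl (m.degree_add_of_lt hgt)

namespace IsMonicGroebnerBasis

variable {B : Set (MvPolynomial σ R)} {f : MvPolynomial σ R}

lemma empty : IsMonicGroebnerBasis m (∅ : Set (MvPolynomial σ R)) where
  monic := by simp
  exists_degree_le h hh h0 := by simp_all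

theorem isSMulRegular_quotient (hB : IsMonicGroebnerBasis m B) (hf : m.Monic f)
    (hBf : ∀ b ∈ B, Disjoint (m.degree b) (m.degree f)) :
    IsSMulRegular (MvPolynomial σ R ⧸ Ideal.span B) f := by
  refine (isSMulRegular_quotient_iff_mem_of_smul_mem _ f).2 fun g hg => ?_
  obtain ⟨r, hgr, hr⟩ := exists_sub_mem_span_of_monic hB.monic g
  suffices r = 0 by simpa [this] using hgr
  by_contra hr0
  have hfr : f * r ∈ Ideal.span B := by
    simpa [mul_sub] using sub_mem hg (Ideal.mul_mem_left _ f hgr)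
  obtain ⟨b, hb, hbr⟩ := hB.exists_degree_le _ hfr (mul_ne_zero_of_monic hf hr0)
  exact not_degree_le_degree_mul hf hr0 (hBf b hb) (hr hr0 b hb) hbr

theorem insert (hB : IsMonicGroebnerBasis m B) (hf : m.Monic f)
    (hBf : ∀ b ∈ B, Disjoint (m.degree b) (m.degree f)) :
    IsMonicGroebnerBasis m (insert f B) where
  monic := Set.forall_mem_insert.2 ⟨hf, hB.monic⟩
  exists_degree_le h hh h0 := by
    obtain ⟨c, z, hz, rfl⟩ := Ideal.mem_span_insert.1 hh
    obtain ⟨r, hcr, hr⟩ := exists_sub_mem_span_of_monic hB.monic c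
    obtain ⟨y, hy, hsum⟩ : ∃ y ∈ Ideal.span B, c * f + z = f * r + y :=
      ⟨(c - r) * f + z, add_mem (Ideal.mul_mem_right _ _ hcr) hz, by ring⟩
    rw [hsum] at h0 ⊢
    rcases eq_or_ne r 0 with rfl | hr0
    · simp only [mul_zero, zero_add] at h0 ⊢
      obtain ⟨b, hb, hby⟩ := hB.exists_degree_le y hy h0
      exact ⟨b, Set.mem_insert_of_mem _ hb, hby⟩
    have hfr : m.degree f ≤ m.degree (f * r) := degree_mul_of_monic hf hr0 ▸ le_self_add
    rcases eq_or_ne y 0 with rfl | hy0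
    · exact ⟨f, Set.mem_insert _ _, by rwa [add_zero]⟩
    obtain ⟨b, hb, hby⟩ := hB.exists_degree_le y hy hy0
    -- The leading terms of `f * r` and `y` cannot cancel: that of `b` divides only the latter.
    have hne : m.degree (f * r) ≠ m.degree y := fun he =>
      not_degree_le_degree_mul hf hr0 (hBf b hb) (hr hr0 b hb) (he ▸ hby)
    rcases degree_add_eq_or_eq_of_ne hne with he | he
    · exact ⟨f, Set.mem_insert _ _, he ▸ hfr⟩
    · exact ⟨b, Set.mem_insert_of_mem _ hb, he ▸ hby⟩

theorem of_pairwise_disjoint {l : List (MvPolynomial σ R)} (hl : ∀ f ∈ l, m.Monic f)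
    (hd : l.Pairwise fun f g => Disjoint (m.degree f) (m.degree g)) :
    IsMonicGroebnerBasis m {f | f ∈ l} := by
  induction l with
  | nil => simpa using empty
  | cons f l ih =>
    rw [List.forall_mem_cons] at hl
    rw [List.pairwise_cons] at hd
    rw [List.setOfPred_mem_cons]
    exact (ih hl.2 hd.2).insert hl.1 fun b hb => (hd.1 b hb).symm

end IsMonicGroebnerBasis

theorem isWeaklyRegular_of_pairwise_disjoint_degree {l : List (MvPolynomial σ R)}
    (hl : ∀ f ∈ l, m.Monic f)
    (hd : l.Pairwise fun f g => Disjoint (m.degree f) (m.degree g)) :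
    IsWeaklyRegular (MvPolynomial σ R) l := by
  refine ⟨fun i hi => ?_⟩
  rw [smul_eq_mul, Ideal.mul_top]
  refine (IsMonicGroebnerBasis.of_pairwise_disjoint (fun f hf => hl f (List.mem_of_mem_take hf))
    (hd.sublist (List.take_sublist i l))).isSMulRegular_quotient (hl _ (List.getElem_mem hi)) ?_
  intro b hb
  obtain ⟨j, hj, rfl⟩ := List.mem_take_iff_getElem.1 hb
  exact List.pairwise_iff_getElem.1 hd j i _ hi (by omega)

end Groebner

section Height

variable {R : Type*} [CommRing R]

lemma height_add_one_le_height_sup_span_singleton {I : Ideal R} {x : R}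
    (hx : IsSMulRegular (R ⧸ I) x) : I.height + 1 ≤ (I ⊔ Ideal.span {x}).height := by
  rw [Ideal.height_eq_inf_minimalPrimes (I ⊔ _)]
  refine le_iInf₂ fun P hP => ?_
  have := hP.isPrime
  obtain ⟨Q, hQ, hQP⟩ := Ideal.exists_minimalPrimes_le (le_sup_left.trans hP.le)
  have := hQ.isPrime
  have hxP : x ∈ P := hP.le (Ideal.mem_sup_right (Ideal.mem_span_singleton_self x))
  have hxQ : x ∉ Q := hx.notMem_of_mem_minimalPrimes (by rwa [Ideal.annihilator_quotient])
  calc I.height + 1 ≤ Q.height + 1 := by gcongr; exact hQ.le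
    _ ≤ P.height := Ideal.height_add_one_le_of_lt_of_isPrime
      (lt_of_le_of_ne hQP fun h => hxQ (h ▸ hxP))

theorem length_le_height_ofList {rs : List R} (h : IsWeaklyRegular R rs) :
    (rs.length : ℕ∞) ≤ (Ideal.ofList rs).height := by
  induction rs using List.reverseRecOn with
  | nil => simp
  | append_singleton rs x ih =>
    rw [isWeaklyRegular_append_iff, isWeaklyRegular_singleton_iff, smul_eq_mul, Ideal.mul_top] at h
    rw [List.length_append, List.length_singleton, Ideal.ofList_append, Ideal.ofList_singleton]
    push_cast
    exact (add_le_add_left (ih h.1) 1).trans (height_add_one_le_height_sup_span_singleton h.2)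

lemma idealHeight_eq_height (I : Ideal R) : idealHeight I = I.height := by
  refine le_antisymm ?_ (le_iInf₂ fun P hP => ?_)
  · rw [Ideal.height_eq_inf_minimalPrimes]
    refine le_iInf₂ fun P hP => ?_
    let Q : PrimeSpectrum R := ⟨P, hP.isPrime⟩
    calc idealHeight I ≤ Order.height Q := iInf₂_le Q hP.le
      _ = P.height := Q.height_eq_orderHeight.symm
  · rw [← P.height_eq_orderHeight]
    exact Ideal.height_mono hP

end Height

section LeadingTerm

variable {σ R κ : Type*} [CommRing R] [Fintype κ] {m : MonomialOrder σ}

lemma coeff_sum_monomial_of_ne {e : κ → σ →₀ ℕ} {c : κ → R} {k₀ : κ}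
    (he : ∀ k ≠ k₀, e k ≠ e k₀) : coeff (e k₀) (∑ k, monomial (e k) (c k)) = c k₀ := by
  classical
  rw [coeff_sum, Finset.sum_eq_single k₀]
  · simp
  · intro k _ hk
    rw [coeff_monomial, if_neg (he k hk)]
  · simp

lemma degree_sum_monomial_of_lt {e : κ → σ →₀ ℕ} {c : κ → R} {k₀ : κ}
    (he : ∀ k ≠ k₀, e k ≺[m] e k₀) (hc : c k₀ ≠ 0) :
    m.degree (∑ k, monomial (e k) (c k)) = e k₀ := by
  have hne : ∀ k ≠ k₀, e k ≠ e k₀ := fun k hk h => (he k hk).ne (congrArg m.toSyn h)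
  refine m.toSyn.injective (le_antisymm (m.degree_sum_le.trans (Finset.sup_le fun k _ => ?_))
    (m.le_degree (by rwa [mem_support_iff, coeff_sum_monomial_of_ne hne])))
  refine (m.degree_monomial_le _).trans ?_
  rcases eq_or_ne k k₀ with rfl | hk
  · exact le_rfl
  · exact (he k hk).le

lemma monic_sum_monomial_of_lt {e : κ → σ →₀ ℕ} {c : κ → R} {k₀ : κ}
    (he : ∀ k ≠ k₀, e k ≺[m] e k₀) (hc : c k₀ = 1) : m.Monic (∑ k, monomial (e k) (c k)) := by
  nontriviality R
  have hne : ∀ k ≠ k₀, e k ≠ e k₀ := fun k hk h => (he k hk).ne (congrArg m.toSyn h)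
  rw [MonomialOrder.Monic, MonomialOrder.leadingCoeff,
    degree_sum_monomial_of_lt he (hc ▸ one_ne_zero), coeff_sum_monomial_of_ne hne, hc]

end LeadingTerm

lemma exists_lt_apply_and_forall_lt_fixed {ι : Type*} [LinearOrder ι] [WellFoundedLT ι]
    {τ : Equiv.Perm ι} (hτ : τ ≠ 1) : ∃ i, i < τ i ∧ ∀ j < i, τ j = j := by
  have hne : {i | τ i ≠ i}.Nonempty := by
    by_contra! h
    exact hτ (Equiv.ext fun i => by simpa using (Set.ext_iff.1 h i))
  obtain ⟨i, hi, hmin⟩ := wellFounded_lt.has_min _ hne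
  have hfix : ∀ j < i, τ j = j := fun j hj => not_not.1 fun h => hmin j h hj
  exact ⟨i, lt_of_le_of_ne (not_lt.1 fun h => hi (τ.injective (hfix _ h))) (Ne.symm hi), hfix⟩

section GenericMinor

variable {α β ι R : Type*} [Fintype ι] [CommRing R]

/-- The exponent vector of `∏ r, x (a r) (b (τ r))`, the monomial indexed by the permutation `τ` in
the expansion of the minor with rows `a` and columns `b` of the generic matrix. -/
noncomputable def permExponent (a : ι → α) (b : ι → β) (τ : Equiv.Perm ι) : α × β →₀ ℕ :=
  ∑ r, Finsupp.single (a r, b (τ r)) 1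

lemma det_submatrix_mvPolynomialX [DecidableEq ι] (a : ι → α) (b : ι → β) :
    ((mvPolynomialX α β R).submatrix a b).det =
      ∑ τ, monomial (permExponent a b τ) ((Equiv.Perm.sign τ : ℤ) : R) := by
  rw [← det_transpose, det_apply']
  refine Finset.sum_congr rfl fun τ _ => ?_
  have hmon : monomial (permExponent a b τ) (1 : R) = ∏ r, X (a r, b (τ r)) :=
    monomial_sum_one _ _
  simp only [transpose_apply, submatrix_apply, mvPolynomialX_apply, ← hmon]
  rw [← map_intCast (C : R →+* MvPolynomial (α × β) R), C_mul_monomial, mul_one]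

variable [LinearOrder α] [LinearOrder β] [WellFoundedGT (α ×ₗ β)]

variable (α β) in
/-- The lexicographic monomial order in the variables `x i j` ordered row by row, `x i j` being
larger the earlier it comes. It is a diagonal order: the leading term of a minor is the product of
its diagonal entries. -/
noncomputable def rowMajorLex : MonomialOrder (α × β) where
  syn := (MonomialOrder.lex (σ := α ×ₗ β)).syn
  toSyn := (Finsupp.domCongr toLex).trans (MonomialOrder.lex (σ := α ×ₗ β)).toSyn
  toSyn_monotone _ _ h := MonomialOrder.lex.toSyn_monotone fun p => h (ofLex p)
  wellFoundedLT_syn := (MonomialOrder.lex (σ := α ×ₗ β)).wellFoundedLT_syn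

lemma rowMajorLex_lt_iff {c d : α × β →₀ ℕ} :
    c ≺[rowMajorLex α β] d ↔ ∃ p, (∀ q, toLex q < toLex p → c q = d q) ∧ c p < d p :=
  calc c ≺[rowMajorLex α β] d
      ↔ toLex (c.equivMapDomain toLex) < toLex (d.equivMapDomain toLex) := Iff.rfl
    _ ↔ _ := Finsupp.Lex.lt_iff

variable [LinearOrder ι] {a a' : ι → α} {b b' : ι → β}

lemma permExponent_lt_permExponent_one (ha : StrictMono a) (hb : StrictMono b)
    {τ : Equiv.Perm ι} (hτ : τ ≠ 1) :
    permExponent a b τ ≺[rowMajorLex α β] permExponent a b 1 := by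
  obtain ⟨i, hi, hfix⟩ := exists_lt_apply_and_forall_lt_fixed hτ
  simp only [rowMajorLex_lt_iff, permExponent, Finsupp.finsetSum_apply, Equiv.Perm.one_apply]
  refine ⟨(a i, b i), fun q hq => Finset.sum_congr rfl fun r _ => ?_, ?_⟩
  · rcases lt_or_ge r i with hr | hr
    · rw [hfix r hr]
    have hne (j : ι) (hj : r = i → i ≤ j) : (a r, b j) ≠ q := by
      rintro rfl
      refine hq.not_ge (Prod.Lex.toLex_le_toLex.2 ?_)
      exact hr.lt_or_eq.imp (ha ·) fun h => ⟨congrArg a h, hb.monotone (hj h.symm)⟩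
    rw [Finsupp.single_eq_of_ne' (hne _ fun h => h ▸ hi.le),
      Finsupp.single_eq_of_ne' (hne r fun _ => hr)]
  · calc ∑ r, Finsupp.single (a r, b (τ r)) 1 (a i, b i) = 0 := by
          refine Finset.sum_eq_zero fun r _ => Finsupp.single_eq_of_ne' fun h => ?_
          obtain ⟨har, hbr⟩ := Prod.mk.inj h
          obtain rfl := ha.injective har
          exact hi.ne' (hb.injective hbr)
      _ < Finsupp.single (a i, b i) 1 (a i, b i) := by simp
      _ ≤ ∑ r, Finsupp.single (a r, b r) 1 (a i, b i) :=
          Finset.single_le_sum (f := fun r => Finsupp.single (a r, b r) 1 (a i, b i))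
            (fun _ _ => zero_le) (Finset.mem_univ i)

lemma degree_det_submatrix_mvPolynomialX [Nontrivial R] (ha : StrictMono a) (hb : StrictMono b) :
    (rowMajorLex α β).degree ((mvPolynomialX α β R).submatrix a b).det =
      ∑ r, Finsupp.single (a r, b r) 1 := by
  rw [det_submatrix_mvPolynomialX]
  exact degree_sum_monomial_of_lt (k₀ := 1)
    (fun τ hτ => permExponent_lt_permExponent_one ha hb hτ) (by simp)

lemma monic_det_submatrix_mvPolynomialX (ha : StrictMono a) (hb : StrictMono b) :
    (rowMajorLex α β).Monic ((mvPolynomialX α β R).submatrix a b).det := by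
  rw [det_submatrix_mvPolynomialX]
  exact monic_sum_monomial_of_lt (k₀ := 1)
    (fun τ hτ => permExponent_lt_permExponent_one ha hb hτ) (by simp)

lemma disjoint_degree_det_submatrix_mvPolynomialX (ha : StrictMono a) (hb : StrictMono b)
    (ha' : StrictMono a') (hb' : StrictMono b') (h : ∀ r s, (a r, b r) ≠ (a' s, b' s)) :
    Disjoint ((rowMajorLex α β).degree ((mvPolynomialX α β R).submatrix a b).det)
      ((rowMajorLex α β).degree ((mvPolynomialX α β R).submatrix a' b').det) := by
  rcases subsingleton_or_nontrivial R with _ | _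
  · rw [MonomialOrder.degree_subsingleton]
    exact disjoint_bot_left
  rw [degree_det_submatrix_mvPolynomialX ha hb, degree_det_submatrix_mvPolynomialX ha' hb',
    Finsupp.disjoint_iff, Finset.disjoint_left]
  intro p hp hp'
  obtain ⟨r, -, hr⟩ := Finsupp.mem_support_finsetSum p hp
  obtain ⟨s, -, hs⟩ := Finsupp.mem_support_finsetSum p hp'
  rw [Finsupp.mem_support_single] at hr hs
  exact h r s (hr.1.symm.trans hs.1)

theorem isWeaklyRegular_det_submatrix_mvPolynomialX {N : ℕ} {a : Fin N → ι → α}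
    {b : Fin N → ι → β} (ha : ∀ i, StrictMono (a i)) (hb : ∀ i, StrictMono (b i))
    (h : ∀ i j, i < j → ∀ r s, (a i r, b i r) ≠ (a j s, b j s)) :
    IsWeaklyRegular (MvPolynomial (α × β) R)
      (List.ofFn fun i => ((mvPolynomialX α β R).submatrix (a i) (b i)).det) := by
  refine isWeaklyRegular_of_pairwise_disjoint_degree (m := rowMajorLex α β) ?_ ?_
  · rw [List.forall_mem_ofFn_iff]
    exact fun i => monic_det_submatrix_mvPolynomialX (ha i) (hb i)
  · rw [List.pairwise_ofFn]
    exact fun i j hij =>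
      disjoint_degree_det_submatrix_mvPolynomialX (ha i) (hb i) (ha j) (hb j) (h i j hij)

end GenericMinor

section ConsecutiveMinors

variable {m n k : ℕ}

/-- The minor `[a 1, …, a k | 1, …, k]` of the generic `m × n` matrix over `A`. -/
noncomputable def initialColumnsMinor (A : Type*) [CommRing A] (hkn : k ≤ n) (a : Fin k → Fin m) :
    MvPolynomial (Fin m × Fin n) A :=
  ((mvPolynomialX (Fin m) (Fin n) A).submatrix a (Fin.castLE hkn)).det

/-- The ideal `I k` generated by the minors of the generic `m × n` matrix over `A` whose column set
is `{1, …, k}`. -/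
noncomputable def initialColumnsMinorIdeal (A : Type*) [CommRing A] (m : ℕ) (hkn : k ≤ n) :
    Ideal (MvPolynomial (Fin m × Fin n) A) :=
  Ideal.span {p | ∃ a : Fin k → Fin m, StrictMono a ∧ p = initialColumnsMinor A hkn a}

lemma val_add_val_lt_of_le (hkm : k ≤ m) (i : Fin (m - k + 1)) (r : Fin k) : (i : ℕ) + r < m := by
  omega

/-- The `k` consecutive row indices `i, i + 1, …, i + k - 1`. -/
def consecutiveRows (hkm : k ≤ m) (i : Fin (m - k + 1)) (r : Fin k) : Fin m :=
  ⟨i + r, val_add_val_lt_of_le hkm i r⟩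

lemma strictMono_consecutiveRows (hkm : k ≤ m) (i : Fin (m - k + 1)) :
    StrictMono (consecutiveRows hkm i) :=
  fun _ _ hrs => Nat.add_lt_add_left hrs i

theorem height_Ik_ge_and_consecutive_minors_regular_general {A : Type*} [CommRing A]
    (hkm : k ≤ m) (hkn : k ≤ n) :
    IsWeaklyRegular (MvPolynomial (Fin m × Fin n) A)
      (List.ofFn fun i => initialColumnsMinor A hkn (consecutiveRows hkm i)) ∧
    ((m - k + 1 : ℕ) : ℕ∞) ≤ idealHeight (initialColumnsMinorIdeal A m hkn) := by
  have hreg : IsWeaklyRegular (MvPolynomial (Fin m × Fin n) A)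
      (List.ofFn fun i => initialColumnsMinor A hkn (consecutiveRows hkm i)) := by
    refine isWeaklyRegular_det_submatrix_mvPolynomialX (strictMono_consecutiveRows hkm)
      (fun _ => Fin.strictMono_castLE hkn) fun i j hij r s hrs => ?_
    -- On the diagonal of the `i`-th minor, row index minus column index is constantly `i`.
    simp only [consecutiveRows, Prod.mk.injEq, Fin.ext_iff, Fin.val_castLE] at hrs
    omega
  refine ⟨hreg, ?_⟩
  have hle : Ideal.ofList (List.ofFn fun i => initialColumnsMinor A hkn (consecutiveRows hkm i)) ≤
      initialColumnsMinorIdeal A m hkn :=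
    Ideal.span_mono ((List.forall_mem_ofFn_iff).2 fun i =>
      ⟨_, strictMono_consecutiveRows hkm i, rfl⟩)
  calc ((m - k + 1 : ℕ) : ℕ∞) ≤ _ := by simpa using length_le_height_ofList hreg
    _ ≤ (initialColumnsMinorIdeal A m hkn).height := Ideal.height_mono hle
    _ = _ := (idealHeight_eq_height _).symm

end ConsecutiveMinors

/-- Let `I k` be the ideal of `K[x i j]` generated by the `k×k` minors of the generic
`n×n` matrix with column set `{1, …, k}`.  The `n − k + 1` minors
`[i, i+1, …, i+k−1 | 1, …, k]` form a regular sequence, and the height of `I k` is at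
least `n − k + 1`. -/
theorem height_Ik_ge_and_consecutive_minors_regular
    {K : Type*} [Field K] (n k : ℕ) (hk1 : 1 ≤ k) (hkn : k ≤ n)
    (Xv : Fin n → Fin n → MvPolynomial (Fin n × Fin n) K)
    (hX : ∀ i j, Xv i j = MvPolynomial.X (i, j))
    (Ik : Ideal (MvPolynomial (Fin n × Fin n) K))
    (hIk : Ik = Ideal.span {p | ∃ a : Fin k → Fin n, StrictMono a ∧
      p = (Matrix.of fun r c : Fin k =>
        Xv (a r) ⟨c.val, lt_of_lt_of_le c.isLt hkn⟩).det}) :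
    RingTheory.Sequence.IsWeaklyRegular (MvPolynomial (Fin n × Fin n) K)
      (List.ofFn fun i : Fin (n - k + 1) =>
        (Matrix.of fun r c : Fin k =>
          Xv ⟨i.val + r.val, by omega⟩ ⟨c.val, lt_of_lt_of_le c.isLt hkn⟩).det) ∧
    ((n - k + 1 : ℕ) : ℕ∞) ≤ idealHeight Ik := by
  obtain rfl : Xv = mvPolynomialX (Fin n) (Fin n) K := by
    ext1 i; ext1 j; exact hX i j
  subst hIk
  exact height_Ik_ge_and_consecutive_minors_regular_general hkn hkn
end

section
/- Let I be a homogeneous ideal in a graded polynomial ring R over a field, with minimal graded free resolutions F• of R/(I : f) and G• of R/I, and suppose φ•: F•(−d) → G• lifts multiplication by a homogeneous element f of degree d. If for all i the twisted degrees of F_{i−1}(−d) and G_i are distinct except in homological degree where cancellation occurs... [Specialized instance:] With R = K[x_{ij}, y_j : 1 ≤ i,j ≤ n], g_i = Σ_j x_{ij}y_j, and Δ = det X, the ideal ⟨g_1, ..., g_n, Δ⟩ has total Betti numbers β_0 = 1, β_i = C(n, i−1) + C(n, i) for 1 ≤ i ≤ n−1, and β_n = n. -/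
open MvPolynomial Matrix

/-- `β` is the sequence of total Betti numbers of `M`: there is a free resolution
`⋯ → R^(β 1) → R^(β 0) → M → 0` which is minimal in the sense that all differentials
have image inside `m` times the ambient free module (`m` the maximal/irrelevant ideal). -/
def IsMinimalFreeRes {R : Type*} [CommRing R] (m : Ideal R)
    (M : Type*) [AddCommGroup M] [Module R M] (β : ℕ → ℕ) : Prop :=
  ∃ (f : (i : ℕ) → ((Fin (β (i + 1)) → R) →ₗ[R] (Fin (β i) → R)))
    (ε : (Fin (β 0) → R) →ₗ[R] M),
      Function.Surjective ε ∧
      LinearMap.ker ε = LinearMap.range (f 0) ∧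
      (∀ i, LinearMap.ker (f i) = LinearMap.range (f (i + 1))) ∧
      (∀ i, LinearMap.range (f i) ≤ m • (⊤ : Submodule R (Fin (β i) → R)))

/-!
Write `Δ = det A` and `g = A *ᵥ y`. Cramer's rule gives `⟨y⟩ Δ ⊆ ⟨g⟩`, and `⟨g⟩ : Δ = ⟨y⟩` when `Δ`
is a nonzerodivisor modulo `⟨y⟩`. The Koszul complexes of `y` and of `g` resolve the two quotients,
since both sequences are regular, and the map of exterior algebras induced by `A` is a chain map
between them that is multiplication by `Δ` in top degree; its mapping cone therefore resolves
`R ⧸ ⟨g, Δ⟩`. The only unit entries of the cone are those of the identity of `⋀⁰`. They cancel one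
pair of free summands, and what remains is minimal.

For generic `A` and `y` the leading monomials of the entries of `g` are the coprime monomials
`A i i * y i`, in an order that eliminates the diagonal variables, which makes `g` regular.
-/

theorem IsMinimalFreeRes.of_linearEquiv {R M : Type*} [CommRing R] [AddCommGroup M] [Module R M]
    {m : Ideal R} {C : ℕ → Type*} [∀ i, AddCommGroup (C i)] [∀ i, Module R (C i)] {β : ℕ → ℕ}
    (e : ∀ i, C i ≃ₗ[R] (Fin (β i) → R)) (d : ∀ i, C (i + 1) →ₗ[R] C i) (ε : C 0 →ₗ[R] M)
    (hε : Function.Surjective ε) (hdε : Function.Exact (d 0) ε)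
    (hd : ∀ i, Function.Exact (d (i + 1)) (d i))
    (hm : ∀ i, LinearMap.range (d i) ≤ m • ⊤) : IsMinimalFreeRes m M β := by
  refine ⟨fun i => e i ∘ₗ d i ∘ₗ (e (i + 1)).symm, ε ∘ₗ (e 0).symm,
    hε.comp (e 0).symm.surjective, ?_, fun i => ?_, fun i => ?_⟩
  · refine (Function.Exact.of_ladder_linearEquiv_of_exact (e₁ := e 1) (e₂ := e 0)
      (e₃ := .refl R M) ?_ ?_ hdε).linearMap_ker_eq <;> ext <;> simp
  · refine (Function.Exact.of_ladder_linearEquiv_of_exact (e₁ := e (i + 2)) (e₂ := e (i + 1))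
      (e₃ := e i) ?_ ?_ (hd i)).linearMap_ker_eq <;> ext <;> simp
  · rw [LinearMap.range_comp, LinearMap.range_comp_of_range_eq_top _ (LinearEquiv.range _)]
    refine (Submodule.map_mono (hm i)).trans ?_
    rw [Submodule.map_smul'']
    exact smul_mono_right m le_top

namespace Northcott

open ExteriorAlgebra

section ExteriorAlgebra

variable {R : Type*} [CommRing R] {n : ℕ}

variable (R n) in
/-- The terms of the Koszul complex of `n` elements of `R`, inside the exterior algebra of `R ^ n`.
The exterior degree is shifted by one, `koszulTerm R n (k + 1)` being `⋀^k`, so that the complex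
starts with a zero term in degree `0`. -/
def koszulTerm : ℕ → Submodule R (ExteriorAlgebra R (Fin n → R))
  | 0 => ⊥
  | k + 1 => ⋀[R]^k (Fin n → R)

variable (R) in
/-- The standard generator `e i` of the exterior algebra of `R ^ n`. -/
abbrev gen (i : Fin n) : ExteriorAlgebra R (Fin n → R) := ι R (Pi.single i 1)

/-- Interior multiplication by the `i`-th coordinate form on the exterior algebra of `R ^ n`. -/
def interior (i : Fin n) : ExteriorAlgebra R (Fin n → R) →ₗ[R] ExteriorAlgebra R (Fin n → R) :=
  CliffordAlgebra.contractLeft (Q := (0 : QuadraticForm R (Fin n → R))) (LinearMap.proj i)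

/-- The endomorphism of the exterior algebra of `R ^ n` induced by a square matrix. -/
noncomputable abbrev extMap (A : Matrix (Fin n) (Fin n) R) :
    ExteriorAlgebra R (Fin n → R) →ₐ[R] ExteriorAlgebra R (Fin n → R) :=
  ExteriorAlgebra.map A.mulVecLin

variable {k : ℕ} {a : ExteriorAlgebra R (Fin n → R)}

lemma ι_mul_ι_mul_self (v : Fin n → R) (a : ExteriorAlgebra R (Fin n → R)) :
    ι R v * (ι R v * a) = 0 := by
  rw [← mul_assoc, ι_sq_zero, zero_mul]

lemma ι_mul_ι_mul (v w : Fin n → R) (a : ExteriorAlgebra R (Fin n → R)) :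
    ι R v * (ι R w * a) = -(ι R w * (ι R v * a)) := by
  rw [← mul_assoc, ← mul_assoc, eq_neg_of_add_eq_zero_left (ι_add_mul_swap v w), neg_mul]

lemma ι_eq_sum_gen (v : Fin n → R) : ι R v = ∑ i, v i • gen R i := by
  conv_lhs => rw [pi_eq_sum_univ' v, map_sum]
  simp [gen]

lemma ι_mul_eq_sum (v : Fin n → R) (a : ExteriorAlgebra R (Fin n → R)) :
    ι R v * a = ∑ i, v i • (gen R i * a) := by
  rw [ι_eq_sum_gen, Finset.sum_mul]
  simp only [smul_mul_assoc]

lemma interior_ι_mul (i : Fin n) (v : Fin n → R) (a : ExteriorAlgebra R (Fin n → R)) :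
    interior i (ι R v * a) = v i • a - ι R v * interior i a :=
  CliffordAlgebra.contractLeft_ι_mul _ _ _

lemma gen_mul_interior_self {i : Fin n} (h : gen R i * a = 0) : gen R i * interior i a = a := by
  have := interior_ι_mul i (Pi.single i 1) a
  rw [h, map_zero, Pi.single_eq_same, one_smul] at this
  exact (sub_eq_zero.mp this.symm).symm

lemma gen_mul_interior_of_ne {i j : Fin n} (hij : j ≠ i) (h : gen R j * a = 0) :
    gen R j * interior i a = 0 := by
  have := interior_ι_mul i (Pi.single j 1) a
  rwa [h, map_zero, Pi.single_eq_of_ne hij.symm, zero_smul, zero_sub, eq_comm,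
    neg_eq_zero] at this

lemma eq_zero_of_mem_koszulTerm_zero (ha : a ∈ koszulTerm R n 0) : a = 0 := ha

lemma koszulTerm_succ_succ (k : ℕ) :
    koszulTerm R n (k + 2) = LinearMap.range (ι R) * koszulTerm R n (k + 1) :=
  pow_succ' _ _

lemma mem_koszulTerm_one : a ∈ koszulTerm R n 1 ↔ ∃ r, algebraMap R _ r = a := by
  rw [show koszulTerm R n 1 = 1 from pow_zero _, Submodule.mem_one]

lemma ι_mul_mem (v : Fin n → R) (ha : a ∈ koszulTerm R n k) :
    ι R v * a ∈ koszulTerm R n (k + 1) := by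
  cases k with
  | zero => rw [eq_zero_of_mem_koszulTerm_zero ha, mul_zero]; exact zero_mem _
  | succ k =>
    rw [koszulTerm_succ_succ]
    exact Submodule.mul_mem_mul ⟨v, rfl⟩ ha

lemma interior_mem (i : Fin n) (ha : a ∈ koszulTerm R n (k + 1)) :
    interior i a ∈ koszulTerm R n k := by
  induction k generalizing a with
  | zero =>
    obtain ⟨r, rfl⟩ := mem_koszulTerm_one.mp ha
    exact CliffordAlgebra.contractLeft_algebraMap _ _ _
  | succ k ih =>
    rw [koszulTerm_succ_succ] at ha
    induction ha using Submodule.mul_induction_on' with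
    | mem_mul_mem v hv b hb =>
      obtain ⟨v, rfl⟩ := hv
      rw [interior_ι_mul]
      exact sub_mem (Submodule.smul_mem _ _ hb) (ι_mul_mem v (ih hb))
    | add b _ c _ hb hc => rw [map_add]; exact add_mem hb hc

lemma extMap_mem (A : Matrix (Fin n) (Fin n) R) (ha : a ∈ koszulTerm R n k) :
    extMap A a ∈ koszulTerm R n k := by
  induction k generalizing a with
  | zero => rw [eq_zero_of_mem_koszulTerm_zero ha, map_zero]; exact zero_mem _
  | succ k ih =>
    cases k with
    | zero =>
      obtain ⟨r, rfl⟩ := mem_koszulTerm_one.mp ha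
      rwa [AlgHom.commutes]
    | succ k =>
      rw [koszulTerm_succ_succ] at ha
      induction ha using Submodule.mul_induction_on' with
      | mem_mul_mem v hv b hb =>
        obtain ⟨v, rfl⟩ := hv
        rw [map_mul, map_apply_ι]
        exact ι_mul_mem _ (ih hb)
      | add b _ c _ hb hc => rw [map_add]; exact add_mem hb hc

lemma extMap_ι_mul (A : Matrix (Fin n) (Fin n) R) (v : Fin n → R)
    (a : ExteriorAlgebra R (Fin n → R)) :
    extMap A (ι R v * a) = ι R (A *ᵥ v) * extMap A a := by
  rw [map_mul, map_apply_ι, mulVecLin_apply]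

lemma extMap_apply_of_mem_koszulTerm_one (A : Matrix (Fin n) (Fin n) R)
    (ha : a ∈ koszulTerm R n 1) : extMap A a = a := by
  obtain ⟨r, rfl⟩ := mem_koszulTerm_one.mp ha
  exact AlgHom.commutes _ r

lemma mulVec_mem {I : Ideal R} {A : Matrix (Fin n) (Fin n) R} (hA : ∀ i j, A i j ∈ I)
    (v : Fin n → R) (i : Fin n) : (A *ᵥ v) i ∈ I := by
  rw [mulVec, dotProduct]
  exact I.sum_mem fun j _ => I.mul_mem_right (v j) (hA i j)

lemma ι_mul_mem_smul {I : Ideal R} {v : Fin n → R} (hv : ∀ i, v i ∈ I)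
    (ha : a ∈ koszulTerm R n k) : ι R v * a ∈ I • koszulTerm R n (k + 1) := by
  rw [ι_mul_eq_sum]
  exact sum_mem fun i _ => Submodule.smul_mem_smul (hv i) (ι_mul_mem _ ha)

lemma extMap_mem_smul {I : Ideal R} {A : Matrix (Fin n) (Fin n) R} (hA : ∀ i j, A i j ∈ I)
    (ha : a ∈ koszulTerm R n (k + 2)) : extMap A a ∈ I • koszulTerm R n (k + 2) := by
  rw [koszulTerm_succ_succ] at ha
  induction ha using Submodule.mul_induction_on' with
  | mem_mul_mem v hv b hb =>
    obtain ⟨v, rfl⟩ := hv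
    rw [extMap_ι_mul]
    exact ι_mul_mem_smul (mulVec_mem hA v) (extMap_mem A hb)
  | add b _ c _ hb hc => rw [map_add]; exact add_mem hb hc

variable (R n) in
lemma nonempty_koszulTerm_equiv (k : ℕ) :
    Nonempty (koszulTerm R n (k + 1) ≃ₗ[R] (Fin (n.choose k) → R)) := by
  have hcard : Nat.card (Set.powersetCard (Fin n) k) = n.choose k := by
    rw [Set.powersetCard.card, Nat.card_fin]
  exact ⟨((Pi.basisFun R (Fin n)).exteriorPower k).equivFun.trans
    (LinearEquiv.funCongrLeft R R (Finite.equivFinOfCardEq hcard).symm)⟩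

variable (R n) in
lemma nonempty_koszulTerm_top_equiv : Nonempty (koszulTerm R n (n + 1) ≃ₗ[R] R) := by
  obtain ⟨θ⟩ := nonempty_koszulTerm_equiv R n n
  rw [Nat.choose_self] at θ
  exact ⟨θ.trans (LinearEquiv.funUnique (Fin 1) R R)⟩

variable (R n) in
lemma koszulTerm_add_two_eq_bot : koszulTerm R n (n + 2) = ⊥ := by
  obtain ⟨θ⟩ := nonempty_koszulTerm_equiv R n (n + 1)
  rw [Nat.choose_succ_self] at θ
  exact (Submodule.subsingleton_iff_eq_bot).mp θ.toEquiv.subsingleton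

lemma ι_mul_of_mem_koszulTerm_top (v : Fin n → R) (ha : a ∈ koszulTerm R n (n + 1)) :
    ι R v * a = 0 := by
  simpa only [koszulTerm_add_two_eq_bot, Submodule.mem_bot] using ι_mul_mem v ha

lemma extMap_apply_of_mem_koszulTerm_top (A : Matrix (Fin n) (Fin n) R)
    (ha : a ∈ koszulTerm R n (n + 1)) : extMap A a = A.det • a := by
  obtain ⟨θ⟩ := nonempty_koszulTerm_top_equiv R n
  let f : (Fin n → R) [⋀^Fin n]→ₗ[R] R :=
    θ.toLinearMap.compAlternatingMap (exteriorPower.ιMulti R n)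
  have hf (v : Fin n → Fin n → R) : f (A.mulVecLin ∘ v) = A.det * f v := by
    rw [f.eq_smul_basis_det (Pi.basisFun R (Fin n)), AlternatingMap.smul_apply,
      Module.Basis.det_comp, ← toLin'_apply', LinearMap.det_toLin', AlternatingMap.smul_apply,
      smul_eq_mul, smul_eq_mul, mul_left_comm]
  change a ∈ ⋀[R]^n (Fin n → R) at ha
  rw [← ιMulti_span_fixedDegree] at ha
  induction ha using Submodule.span_induction with
  | zero => simp
  | add b c _ _ hb hc => rw [map_add, hb, hc, smul_add]
  | smul r b _ hb => rw [map_smul, hb, smul_comm]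
  | mem b hb =>
    obtain ⟨v, rfl⟩ := hb
    rw [map_apply_ιMulti]
    have : exteriorPower.ιMulti R n (A.mulVecLin ∘ v) = A.det • exteriorPower.ιMulti R n v :=
      θ.injective ((hf v).trans (θ.map_smul _ _).symm)
    exact congrArg Subtype.val this

lemma eq_zero_of_gen_mul_eq_zero (ha : a ∈ koszulTerm R n k) {S : Finset (Fin n)} (hS : k ≤ S.card)
    (h : ∀ i ∈ S, gen R i * a = 0) : a = 0 := by
  induction k generalizing a S with
  | zero => exact ha
  | succ k ih =>
    obtain ⟨i, hi⟩ : S.Nonempty := Finset.card_pos.mp (by lia)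
    have hint : interior i a = 0 := by
      refine ih (S := S.erase i) (interior_mem i ha) (by rw [Finset.card_erase_of_mem hi]; lia) ?_
      intro j hj
      exact gen_mul_interior_of_ne (Finset.ne_of_mem_erase hj) (h j (Finset.mem_of_mem_erase hj))
    rw [← gen_mul_interior_self (h i hi), hint, mul_zero]

end ExteriorAlgebra

section Koszul

open RingTheory.Sequence

variable {R : Type*} [CommRing R] {n k : ℕ} {v : Fin n → R} {a : ExteriorAlgebra R (Fin n → R)}

lemma isWeaklyRegular_ofFn_iff :
    IsWeaklyRegular R (List.ofFn v) ↔
      ∀ i r, v i * r ∈ Ideal.span (v '' Set.Iio i) → r ∈ Ideal.span (v '' Set.Iio i) := by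
  have hspan (i : Fin n) :
      Ideal.ofList ((List.ofFn v).take i) = Ideal.span (v '' Set.Iio i) := by
    rw [Ideal.ofList]
    congr 1
    ext r
    simp only [Set.mem_ofPred_eq, List.mem_take_iff_getElem, List.getElem_ofFn, List.length_ofFn,
      Set.mem_image, Set.mem_Iio]
    constructor
    · rintro ⟨j, hj, rfl⟩
      exact ⟨⟨j, by lia⟩, by simp only [Fin.lt_def]; lia, rfl⟩
    · rintro ⟨j, hj, rfl⟩
      exact ⟨j, by simp only [Fin.lt_def] at hj; lia, rfl⟩
  rw [isWeaklyRegular_iff_Fin, (finCongr (List.length_ofFn (f := v))).forall_congr_left]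
  refine forall_congr' fun i => ?_
  rw [isSMulRegular_quotient_iff_mem_of_smul_mem]
  simp [hspan]

lemma exists_ι_mul_eq_smul_of_mem_span (ha : a ∈ koszulTerm R n (n + 1)) {S : Set (Fin n)} {r : R}
    (hr : r ∈ Ideal.span (v '' S)) :
    ∃ b ∈ koszulTerm R n n, (∀ i ∉ S, gen R i * b = 0) ∧ ι R v * b = r • a := by
  induction hr using Submodule.span_induction with
  | zero => exact ⟨0, zero_mem _, by simp, by simp⟩
  | add r s _ _ hr hs =>
    obtain ⟨b, hb, hSb, hba⟩ := hr
    obtain ⟨c, hc, hSc, hca⟩ := hs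
    refine ⟨b + c, add_mem hb hc, fun i hi => ?_, ?_⟩
    · rw [mul_add, hSb i hi, hSc i hi, add_zero]
    · rw [mul_add, hba, hca, add_smul]
  | smul s r _ hr =>
    obtain ⟨b, hb, hSb, hba⟩ := hr
    refine ⟨s • b, Submodule.smul_mem _ _ hb, fun i hi => ?_, ?_⟩
    · rw [mul_smul_comm, hSb i hi, smul_zero]
    · rw [mul_smul_comm, hba, smul_assoc]
  | mem r hr =>
    obtain ⟨i, hi, rfl⟩ := hr
    refine ⟨interior i a, interior_mem i ha, fun j hj => ?_, ?_⟩
    · exact gen_mul_interior_of_ne (by rintro rfl; exact hj hi) (ι_mul_of_mem_koszulTerm_top _ ha)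
    · have := interior_ι_mul i v a
      rw [ι_mul_of_mem_koszulTerm_top v ha, map_zero] at this
      exact (sub_eq_zero.mp this.symm).symm

lemma exists_ι_mul_eq_iff_mem_span (θ : koszulTerm R n (n + 1) ≃ₗ[R] R) (v : Fin n → R)
    (S : Set (Fin n)) (a : koszulTerm R n (n + 1)) :
    (∃ b ∈ koszulTerm R n n, (∀ i ∉ S, gen R i * b = 0) ∧ ι R v * b = a) ↔
      θ a ∈ Ideal.span (v '' S) := by
  constructor
  · rintro ⟨b, hb, hS, hba⟩
    have hsum : a = ∑ i, v i • (⟨gen R i * b, ι_mul_mem _ hb⟩ : koszulTerm R n (n + 1)) := by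
      ext
      simp [← hba, ← ι_mul_eq_sum]
    rw [hsum, map_sum]
    refine sum_mem fun i _ => ?_
    rw [map_smul, smul_eq_mul]
    by_cases hi : i ∈ S
    · exact Ideal.mul_mem_right _ _ (Ideal.subset_span ⟨i, hi, rfl⟩)
    · have : (⟨gen R i * b, ι_mul_mem _ hb⟩ : koszulTerm R n (n + 1)) = 0 := Subtype.ext (hS i hi)
      rw [this, map_zero, mul_zero]
      exact zero_mem _
  · intro ha
    obtain ⟨b, hb, hS, hba⟩ := exists_ι_mul_eq_smul_of_mem_span (θ.symm 1).2 ha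
    refine ⟨b, hb, hS, hba.trans ?_⟩
    rw [← Submodule.coe_smul, ← map_smul, smul_eq_mul, mul_one, LinearEquiv.symm_apply_apply]

variable (v) in
/-- Exactness below the top degree of the Koszul complex of the subsequence of `v` indexed by `S`.
This complex is encoded, up to a shift, as the multiples of the product of the `e i` with `i ∉ S`
in the Koszul complex of `v`; these are the elements killed by each such `e i`. -/
def KoszulExact (S : Set (Fin n)) : Prop :=
  ∀ k < n, ∀ a ∈ koszulTerm R n (k + 1), (∀ i ∉ S, gen R i * a = 0) → ι R v * a = 0 →
    ∃ b ∈ koszulTerm R n k, (∀ i ∉ S, gen R i * b = 0) ∧ ι R v * b = a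

lemma exists_ι_mul_eq_gen_mul {S : Set (Fin n)} (h : KoszulExact v S) {i : Fin n}
    (hreg : ∀ r, v i * r ∈ Ideal.span (v '' S) → r ∈ Ideal.span (v '' S)) (hk : k < n)
    (ha : a ∈ koszulTerm R n (k + 1)) (hS : ∀ j ∉ insert i S, gen R j * a = 0)
    (hv : ι R v * a = 0) :
    ∃ b ∈ koszulTerm R n (k + 1), (∀ j ∉ S, gen R j * b = 0) ∧ ι R v * b = gen R i * a := by
  have hSi (j : Fin n) (c : ExteriorAlgebra R (Fin n → R))
      (hc : j ≠ i → gen R j * c = 0) : gen R j * (gen R i * c) = 0 := by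
    obtain rfl | hji := eq_or_ne j i
    · exact ι_mul_ι_mul_self _ _
    · rw [ι_mul_ι_mul, hc hji, mul_zero, neg_zero]
  have hSa (j : Fin n) (hj : j ∉ S) (hji : j ≠ i) : gen R j * a = 0 := hS j (by simp [hji, hj])
  have hmem : gen R i * a ∈ koszulTerm R n (k + 2) := ι_mul_mem _ ha
  obtain hk' | rfl := (Nat.succ_le_iff.mpr hk).lt_or_eq
  · refine h (k + 1) hk' _ hmem (fun j hj => hSi j a (hSa j hj)) ?_
    rw [ι_mul_ι_mul, hv, mul_zero, neg_zero]
  · obtain ⟨θ⟩ := nonempty_koszulTerm_top_equiv R (k + 1)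
    refine (exists_ι_mul_eq_iff_mem_span θ v S ⟨_, hmem⟩).mpr (hreg _ ?_)
    rw [← smul_eq_mul, ← map_smul, ← exists_ι_mul_eq_iff_mem_span]
    refine ⟨-(gen R i * interior i a), neg_mem (ι_mul_mem _ (interior_mem i ha)),
      fun j hj => ?_, ?_⟩
    · rw [mul_neg, hSi j _ fun hji => gen_mul_interior_of_ne hji (hSa j hj hji), neg_zero]
    · have := interior_ι_mul i v a
      rw [hv, map_zero, eq_comm, sub_eq_zero] at this
      rw [mul_neg, ι_mul_ι_mul, neg_neg, ← this, mul_smul_comm, Submodule.coe_smul]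

lemma KoszulExact.insert {S : Set (Fin n)} (h : KoszulExact v S) {i : Fin n} (hi : i ∉ S)
    (hreg : ∀ r, v i * r ∈ Ideal.span (v '' S) → r ∈ Ideal.span (v '' S)) :
    KoszulExact v (insert i S) := by
  intro k hk a ha hS hv
  obtain ⟨c, hc, hSc, hca⟩ := exists_ι_mul_eq_gen_mul h hreg hk ha hS hv
  set b := interior i c
  have hbc : gen R i * b = c := gen_mul_interior_self (hSc i hi)
  have hSb (j : Fin n) (hj : j ∉ Insert.insert i S) : gen R j * b = 0 :=
    gen_mul_interior_of_ne (fun h => hj (.inl h)) (hSc j fun h => hj (.inr h))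
  have hb : b ∈ koszulTerm R n k := interior_mem i hc
  obtain ⟨b', hb', hSb', hb'a⟩ : ∃ b' ∈ koszulTerm R n k, (∀ j ∉ S, gen R j * b' = 0) ∧
      ι R v * b' = a + ι R v * b := by
    refine h k hk _ (add_mem ha (ι_mul_mem v hb)) (fun j hj => ?_) ?_
    · rw [mul_add, ι_mul_ι_mul, ← sub_eq_add_neg, sub_eq_zero]
      obtain rfl | hji := eq_or_ne j i
      · rw [hbc, hca]
      · have hj' : j ∉ Insert.insert i S := by simp [hji, hj]
        rw [hS j hj', hSb j hj', mul_zero]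
    · rw [mul_add, hv, ι_mul_ι_mul_self, add_zero]
  refine ⟨b' - b, sub_mem hb' hb, fun j hj => ?_, ?_⟩
  · rw [mul_sub, hSb' j fun h => hj (.inr h), hSb j hj, sub_zero]
  · rw [mul_sub, hb'a, add_sub_cancel_right]

theorem exists_ι_mul_eq_of_isWeaklyRegular (hv : IsWeaklyRegular R (List.ofFn v)) (hk : k < n)
    (ha : a ∈ koszulTerm R n (k + 1)) (hva : ι R v * a = 0) :
    ∃ b ∈ koszulTerm R n k, ι R v * b = a := by
  rw [isWeaklyRegular_ofFn_iff] at hv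
  have hexact (m : ℕ) (hm : m ≤ n) : KoszulExact v {i | i.val < m} := by
    induction m with
    | zero =>
      intro k hk a ha hS _
      have ha0 : a = 0 :=
        eq_zero_of_gen_mul_eq_zero ha (S := Finset.univ) (by simpa using hk) (by simpa using hS)
      exact ⟨0, zero_mem _, by simp, by simp [ha0]⟩
    | succ m ih =>
      have hIio : {i : Fin n | i.val < m} = Set.Iio ⟨m, hm⟩ := rfl
      have hinsert : {i : Fin n | i.val < m + 1} = insert ⟨m, hm⟩ {i : Fin n | i.val < m} := by
        ext i
        simp [Fin.ext_iff, le_iff_eq_or_lt]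
      rw [hinsert]
      exact (ih (by lia)).insert (by simp) (hIio ▸ hv ⟨m, hm⟩)
  obtain ⟨b, hb, -, hba⟩ := hexact n le_rfl k hk a ha (fun i hi => absurd i.2 hi) hva
  exact ⟨b, hb, hba⟩

end Koszul

section Cone

variable {R : Type*} [CommRing R] {n j : ℕ} {A : Matrix (Fin n) (Fin n) R} {y : Fin n → R}
  {p q : ExteriorAlgebra R (Fin n → R) × ExteriorAlgebra R (Fin n → R)}

/-- The differential of the mapping cone of `extMap A`, as a map from the Koszul complex of `y` to
the Koszul complex of `A *ᵥ y`. -/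
noncomputable def coneDiff (A : Matrix (Fin n) (Fin n) R) (y : Fin n → R) :
    ExteriorAlgebra R (Fin n → R) × ExteriorAlgebra R (Fin n → R) →ₗ[R]
      ExteriorAlgebra R (Fin n → R) × ExteriorAlgebra R (Fin n → R) :=
  (LinearMap.mulLeft R (ι R y) ∘ₗ LinearMap.fst R _ _).prod
    ((extMap A).toLinearMap ∘ₗ LinearMap.fst R _ _ -
      LinearMap.mulLeft R (ι R (A *ᵥ y)) ∘ₗ LinearMap.snd R _ _)

variable (R n) in
/-- The terms of the minimal resolution, by cohomological degree: those of the mapping cone of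
`extMap A`, with the summand `⋀^0` cancelled in degrees `0` and `1`, where `extMap A` is the
identity of this summand. -/
def coneTerm :
    ℕ → Submodule R (ExteriorAlgebra R (Fin n → R) × ExteriorAlgebra R (Fin n → R))
  | 0 => ⊥
  | 1 => (koszulTerm R n 2).prod ⊥
  | j + 2 => (koszulTerm R n (j + 3)).prod (koszulTerm R n (j + 2))

lemma coneDiff_apply (a b : ExteriorAlgebra R (Fin n → R)) :
    coneDiff A y (a, b) = (ι R y * a, extMap A a - ι R (A *ᵥ y) * b) := rfl

lemma coneDiff_coneDiff (p : ExteriorAlgebra R (Fin n → R) × ExteriorAlgebra R (Fin n → R)) :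
    coneDiff A y (coneDiff A y p) = 0 := by
  rw [← p.eta, coneDiff_apply, coneDiff_apply, ι_mul_ι_mul_self, extMap_ι_mul, mul_sub,
    ι_mul_ι_mul_self, sub_zero, sub_self, Prod.mk_zero_zero]

lemma coneTerm_le (j : ℕ) :
    coneTerm R n j ≤ (koszulTerm R n (j + 1)).prod (koszulTerm R n j) :=
  match j with
  | 0 => bot_le
  | 1 => Submodule.prod_mono le_rfl bot_le
  | _ + 2 => le_rfl

lemma exists_mem_coneTerm_coneDiff_eq
    (hq : q ∈ (koszulTerm R n (j + 1)).prod (koszulTerm R n j))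
    (hDq : coneDiff A y q ∈ coneTerm R n (j + 1)) :
    ∃ q' ∈ coneTerm R n j, coneDiff A y q' = coneDiff A y q := by
  obtain ⟨a, b⟩ := q
  obtain ⟨ha, hb⟩ : a ∈ koszulTerm R n (j + 1) ∧ b ∈ koszulTerm R n j := hq
  match j with
  | 0 =>
    obtain rfl := eq_zero_of_mem_koszulTerm_zero hb
    obtain rfl : a = 0 := by
      rw [← extMap_apply_of_mem_koszulTerm_one A ha]
      simpa [coneDiff_apply] using hDq.2
    exact ⟨0, zero_mem _, rfl⟩
  | 1 =>
    refine ⟨(a, b) - coneDiff A y (b, 0), ?_, by rw [map_sub, coneDiff_coneDiff, sub_zero]⟩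
    rw [coneDiff_apply, extMap_apply_of_mem_koszulTerm_one A hb, mul_zero, sub_zero]
    exact ⟨sub_mem ha (ι_mul_mem y hb), sub_self b⟩
  | j + 2 => exact ⟨(a, b), ⟨ha, hb⟩, rfl⟩

lemma smul_prod_eq_prod_smul {M N : Type*} [AddCommGroup M] [AddCommGroup N] [Module R M]
    [Module R N] (I : Ideal R) (P : Submodule R M) (Q : Submodule R N) :
    I • P.prod Q = (I • P).prod (I • Q) := by
  rw [LinearMap.prod_eq_sup_map, Submodule.smul_sup, ← Submodule.map_smul'', ← Submodule.map_smul'',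
    ← LinearMap.prod_eq_sup_map]

lemma coneDiff_mem_smul {I : Ideal R} (hA : ∀ i j, A i j ∈ I) (hy : ∀ i, y i ∈ I)
    (hp : p ∈ coneTerm R n j) : coneDiff A y p ∈ I • coneTerm R n (j + 1) := by
  obtain ⟨a, b⟩ := p
  match j with
  | 0 =>
    have h0 : (a, b) = 0 := hp
    rw [h0, map_zero]
    exact zero_mem _
  | j + 1 =>
    obtain ⟨ha, hb⟩ := coneTerm_le _ hp
    rw [coneTerm, smul_prod_eq_prod_smul]
    exact ⟨ι_mul_mem_smul hy ha,
      sub_mem (extMap_mem_smul hA ha) (ι_mul_mem_smul (mulVec_mem hA y) hb)⟩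

open RingTheory.Sequence

lemma exists_coneDiff_eq (hy : IsWeaklyRegular R (List.ofFn y))
    (hAy : IsWeaklyRegular R (List.ofFn (A *ᵥ y)))
    (hcolon : ∀ r, A.det * r ∈ Ideal.span (Set.range (A *ᵥ y)) → r ∈ Ideal.span (Set.range y))
    (hj : j < n) (hp : p ∈ coneTerm R n (j + 1)) (hDp : coneDiff A y p = 0) :
    ∃ q ∈ coneTerm R n j, coneDiff A y q = p := by
  obtain ⟨a, b⟩ := p
  obtain ⟨ha, hb⟩ := coneTerm_le _ hp
  rw [coneDiff_apply, Prod.mk_eq_zero, sub_eq_zero] at hDp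
  obtain ⟨hya, hAb⟩ := hDp
  obtain ⟨c, hc, hca⟩ : ∃ c ∈ koszulTerm R n (j + 1), ι R y * c = a := by
    obtain hj' | rfl := (Nat.succ_le_iff.mpr hj).lt_or_eq
    · exact exists_ι_mul_eq_of_isWeaklyRegular hy hj' ha hya
    · obtain ⟨θ⟩ := nonempty_koszulTerm_top_equiv R (j + 1)
      have hspan : A.det * θ ⟨a, ha⟩ ∈ Ideal.span ((A *ᵥ y) '' Set.univ) := by
        rw [← smul_eq_mul, ← map_smul, ← exists_ι_mul_eq_iff_mem_span]
        refine ⟨b, hb, by simp, ?_⟩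
        rw [← hAb, extMap_apply_of_mem_koszulTerm_top A ha, Submodule.coe_smul]
      obtain ⟨c, hc, -, hca⟩ := (exists_ι_mul_eq_iff_mem_span θ y Set.univ ⟨a, ha⟩).mpr
        (by simpa only [Set.image_univ] using hcolon _ (by simpa only [Set.image_univ] using hspan))
      exact ⟨c, hc, hca⟩
  obtain ⟨d, hd, hdb⟩ : ∃ d ∈ koszulTerm R n j, ι R (A *ᵥ y) * d = extMap A c - b := by
    refine exists_ι_mul_eq_of_isWeaklyRegular hAy hj (sub_mem (extMap_mem A hc) hb) ?_
    rw [mul_sub, ← extMap_ι_mul, hca, hAb, sub_self]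
  have hcd : coneDiff A y (c, d) = (a, b) := by rw [coneDiff_apply, hca, hdb, sub_sub_cancel]
  rw [← hcd] at hp ⊢
  exact exists_mem_coneTerm_coneDiff_eq ⟨hc, hd⟩ hp

lemma exists_coneDiff_eq_iff_mem_span (θ : koszulTerm R n (n + 1) ≃ₗ[R] R)
    (hp : p ∈ coneTerm R n (n + 1)) :
    (∃ q ∈ coneTerm R n n, coneDiff A y q = p) ↔
      θ ⟨p.2, (coneTerm_le _ hp).2⟩ ∈ Ideal.span (insert A.det (Set.range (A *ᵥ y))) := by
  obtain ⟨a, b⟩ := p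
  obtain ⟨ha, hb⟩ := coneTerm_le _ hp
  obtain rfl : a = 0 := by simpa [koszulTerm_add_two_eq_bot] using ha
  have hspan (z : koszulTerm R n (n + 1)) := exists_ι_mul_eq_iff_mem_span θ (A *ᵥ y) Set.univ z
  simp only [Set.image_univ, Set.mem_univ, not_true_eq_false, IsEmpty.forall_iff, implies_true,
    true_and] at hspan
  rw [Ideal.mem_span_insert']
  constructor
  · rintro ⟨⟨c, d⟩, hq, hqp⟩
    obtain ⟨hc, hd⟩ := coneTerm_le _ hq
    rw [coneDiff_apply, extMap_apply_of_mem_koszulTerm_top A hc] at hqp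
    refine ⟨-θ ⟨c, hc⟩, ?_⟩
    rw [neg_mul, mul_comm, ← smul_eq_mul, ← map_smul, ← map_neg, ← map_add, ← hspan]
    refine ⟨-d, neg_mem hd, ?_⟩
    simp [← (Prod.mk.inj hqp).2, sub_eq_neg_add]
  · rintro ⟨r, hr⟩
    obtain ⟨c, hcr⟩ := θ.surjective (-r)
    rw [← neg_neg r, ← hcr, neg_mul, mul_comm, ← smul_eq_mul, ← map_smul, ← map_neg, ← map_add,
      ← hspan] at hr
    obtain ⟨d, hd, hdc⟩ := hr
    have hcd : coneDiff A y (c, -d) = (0, b) := by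
      rw [coneDiff_apply, ι_mul_of_mem_koszulTerm_top _ c.2,
        extMap_apply_of_mem_koszulTerm_top _ c.2, mul_neg, hdc]
      simp
    rw [← hcd] at hp ⊢
    exact exists_mem_coneTerm_coneDiff_eq ⟨c.2, neg_mem hd⟩ hp

/-- The elements of a product of submodules, as pairs of elements of the factors. -/
def prodEquivProd {M N : Type*} [AddCommGroup M] [AddCommGroup N] [Module R M] [Module R N]
    (P : Submodule R M) (Q : Submodule R N) : P.prod Q ≃ₗ[R] P × Q where
  toFun p := (⟨p.1.1, p.2.1⟩, ⟨p.1.2, p.2.2⟩)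
  invFun p := ⟨(p.1, p.2), p.1.2, p.2.2⟩
  map_add' _ _ := rfl
  map_smul' _ _ := rfl

variable (R n) in
lemma nonempty_coneTerm_add_two_equiv (j : ℕ) :
    Nonempty (coneTerm R n (j + 2) ≃ₗ[R] (Fin ((n + 1).choose (j + 2)) → R)) := by
  obtain ⟨e⟩ := nonempty_koszulTerm_equiv R n (j + 2)
  obtain ⟨f⟩ := nonempty_koszulTerm_equiv R n (j + 1)
  rw [Nat.choose_succ_succ, add_comm (n.choose (j + 1))]
  exact ⟨prodEquivProd _ _ ≪≫ₗ e.prodCongr f ≪≫ₗ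
    (LinearEquiv.sumArrowLequivProdArrow _ _ R R).symm ≪≫ₗ
    LinearEquiv.funCongrLeft R R finSumFinEquiv.symm⟩

variable (R n) in
lemma nonempty_coneTerm_one_equiv : Nonempty (coneTerm R n 1 ≃ₗ[R] (Fin n → R)) := by
  obtain ⟨e⟩ := nonempty_koszulTerm_equiv R n 1
  rw [Nat.choose_one_right] at e
  exact ⟨prodEquivProd _ _ ≪≫ₗ LinearEquiv.prodUnique ≪≫ₗ e⟩

variable (R n) in
/-- The terms of the minimal resolution, by homological degree; the truncated subtraction makes them
zero in degrees greater than `n`. -/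
def resTerm (i : ℕ) :
    Submodule R (ExteriorAlgebra R (Fin n → R) × ExteriorAlgebra R (Fin n → R)) :=
  coneTerm R n (n + 1 - i)

lemma resTerm_eq_coneTerm {i : ℕ} (h : i + j = n + 1) : resTerm R n i = coneTerm R n j := by
  rw [resTerm, ← h, Nat.add_sub_cancel_left]

lemma resTerm_eq_bot {i : ℕ} (hi : n < i) : resTerm R n i = ⊥ := by
  rw [resTerm, Nat.sub_eq_zero_of_le hi, coneTerm]

lemma coneDiff_mem_smul_resTerm {I : Ideal R} (hA : ∀ i j, A i j ∈ I) (hy : ∀ i, y i ∈ I) (i : ℕ)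
    (hp : p ∈ resTerm R n (i + 1)) : coneDiff A y p ∈ I • resTerm R n i := by
  obtain hi | hi := lt_or_ge n i
  · rw [resTerm_eq_bot (by lia), Submodule.mem_bot] at hp
    rw [hp, map_zero]
    exact zero_mem _
  · obtain ⟨j, rfl⟩ := Nat.exists_eq_add_of_le hi
    rw [resTerm_eq_coneTerm (j := j) (by lia)] at hp
    rw [resTerm_eq_coneTerm (j := j + 1) (by lia)]
    exact coneDiff_mem_smul hA hy hp

lemma exists_mem_resTerm_coneDiff_eq (hy : IsWeaklyRegular R (List.ofFn y))
    (hAy : IsWeaklyRegular R (List.ofFn (A *ᵥ y)))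
    (hcolon : ∀ r, A.det * r ∈ Ideal.span (Set.range (A *ᵥ y)) → r ∈ Ideal.span (Set.range y))
    {i : ℕ} (hp : p ∈ resTerm R n (i + 1)) (hDp : coneDiff A y p = 0) :
    ∃ q ∈ resTerm R n (i + 2), coneDiff A y q = p := by
  obtain hi | hi := le_or_gt n i
  · rw [resTerm_eq_bot (by lia), Submodule.mem_bot] at hp
    exact ⟨0, zero_mem _, by rw [hp, map_zero]⟩
  · obtain ⟨j, rfl⟩ := Nat.exists_eq_add_of_lt hi
    rw [resTerm_eq_coneTerm (j := j + 1) (by lia)] at hp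
    rw [resTerm_eq_coneTerm (j := j) (by lia)]
    exact exists_coneDiff_eq hy hAy hcolon (by lia) hp hDp

variable (R) in
lemma nonempty_resTerm_equiv (hn : 1 ≤ n) (i : ℕ) :
    Nonempty (resTerm R n i ≃ₗ[R] (Fin (if i = 0 then 1 else if i = n then n else
      if i < n then n.choose (i - 1) + n.choose i else 0) → R)) := by
  obtain hi | rfl | hi := lt_trichotomy i n
  · obtain ⟨j, hj⟩ : ∃ j, i + (j + 2) = n + 1 := ⟨n - 1 - i, by lia⟩
    have hβ : (if i = 0 then 1 else if i = n then n else
        if i < n then n.choose (i - 1) + n.choose i else 0) = (n + 1).choose (j + 2) := by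
      rw [← Nat.choose_symm_of_eq_add hj.symm, if_neg hi.ne, if_pos hi]
      cases i with
      | zero => simp
      | succ i => rw [if_neg i.succ_ne_zero, Nat.choose_succ_succ, Nat.add_sub_cancel]
    rw [hβ, resTerm_eq_coneTerm hj]
    exact nonempty_coneTerm_add_two_equiv R n j
  · rw [if_neg (by lia), if_pos rfl, resTerm_eq_coneTerm rfl]
    exact nonempty_coneTerm_one_equiv R i
  · rw [if_neg (by lia), if_neg hi.ne', if_neg hi.not_gt, resTerm_eq_bot hi]
    exact ⟨LinearEquiv.ofSubsingleton _ _⟩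

theorem isMinimalFreeRes_quotient_span_insert_det {I : Ideal R} (hn : 1 ≤ n)
    (hA : ∀ i j, A i j ∈ I) (hyI : ∀ i, y i ∈ I) (hy : IsWeaklyRegular R (List.ofFn y))
    (hAy : IsWeaklyRegular R (List.ofFn (A *ᵥ y)))
    (hcolon : ∀ r, A.det * r ∈ Ideal.span (Set.range (A *ᵥ y)) → r ∈ Ideal.span (Set.range y)) :
    IsMinimalFreeRes I (R ⧸ Ideal.span (insert A.det (Set.range (A *ᵥ y))))
      (fun i => if i = 0 then 1 else if i = n then n
        else if i < n then n.choose (i - 1) + n.choose i else 0) := by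
  obtain ⟨θ⟩ := nonempty_koszulTerm_top_equiv R n
  have hI (i : ℕ) (p) (hp : p ∈ resTerm R n (i + 1)) : coneDiff A y p ∈ I • resTerm R n i :=
    coneDiff_mem_smul_resTerm hA hyI i hp
  let d (i : ℕ) : resTerm R n (i + 1) →ₗ[R] resTerm R n i :=
    (coneDiff A y).restrict fun p hp => Submodule.smul_le_right (hI i p hp)
  let τ : resTerm R n 0 →ₗ[R] R := θ.toLinearMap ∘ₗ
    (LinearMap.snd R _ _).restrict fun _ hp => (coneTerm_le _ hp).2
  refine .of_linearEquiv (fun i => (nonempty_resTerm_equiv R hn i).some) d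
    (Submodule.mkQ _ ∘ₗ τ) ?_ (fun p => ?_) (fun i p => ⟨fun hp => ?_, ?_⟩) ?_
  · refine (Submodule.mkQ_surjective _).comp (θ.surjective.comp fun a => ?_)
    obtain ⟨n, rfl⟩ := Nat.exists_eq_add_of_le' hn
    exact ⟨⟨(0, a), zero_mem _, a.2⟩, rfl⟩
  · rw [LinearMap.comp_apply, Submodule.mkQ_apply, Submodule.Quotient.mk_eq_zero]
    refine (exists_coneDiff_eq_iff_mem_span θ p.2).symm.trans ?_
    rw [← resTerm_eq_coneTerm (add_comm 1 n)]
    simp [d, Subtype.ext_iff]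
  · obtain ⟨q, hq, hqp⟩ :=
      exists_mem_resTerm_coneDiff_eq hy hAy hcolon p.2 (congrArg Subtype.val hp)
    exact ⟨⟨q, hq⟩, Subtype.ext hqp⟩
  · rintro ⟨q, rfl⟩
    exact Subtype.ext (coneDiff_coneDiff q.1)
  · rintro i _ ⟨p, rfl⟩
    rw [Submodule.mem_smul_top_iff]
    exact hI i p p.2

end Cone

section MonomialOrder

open RingTheory.Sequence

variable {σ R : Type*} [CommRing R] {m : MonomialOrder σ} {B : Set (MvPolynomial σ R)}
  {g : MvPolynomial σ R}

variable (m) in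
/-- `B` is a Gröbner basis of the ideal it spans: the leading monomial of every nonzero element of
the ideal is divisible by the leading monomial of an element of `B`. -/
def IsGroebner (B : Set (MvPolynomial σ R)) : Prop :=
  ∀ f ∈ Ideal.span B, f ≠ 0 → ∃ b ∈ B, m.degree b ≤ m.degree f

lemma degree_mul_of_isUnit (hg : IsUnit (m.leadingCoeff g)) {r : MvPolynomial σ R} (hr : r ≠ 0) :
    m.degree (g * r) = m.degree g + m.degree r :=
  m.degree_mul_of_left_mem_nonZeroDivisors hg.mem_nonZeroDivisors hr

lemma mul_ne_zero_of_isUnit (hg : IsUnit (m.leadingCoeff g)) {r : MvPolynomial σ R} (hr : r ≠ 0) :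
    g * r ≠ 0 := by
  rwa [← m.leadingCoeff_ne_zero_iff, m.leadingCoeff_mul_of_left_mem_nonZeroDivisors
    hg.mem_nonZeroDivisors, ne_eq, hg.mul_right_eq_zero, m.leadingCoeff_eq_zero_iff]

lemma exists_sub_mem_span (hB : ∀ b ∈ B, IsUnit (m.leadingCoeff b)) (hg : IsUnit (m.leadingCoeff g))
    (hgB : ∀ b ∈ B, Disjoint (m.degree g).support (m.degree b).support) (r : MvPolynomial σ R) :
    ∃ r', r - r' ∈ Ideal.span B ∧ (r' ≠ 0 → ∀ b ∈ B, ¬ m.degree b ≤ m.degree (g * r')) := by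
  obtain ⟨q, r', hr, -, hr'⟩ := m.div_set hB r
  refine ⟨r', ?_, fun h0 b hb hle => hr' _ (m.degree_mem_support h0) b hb fun x => ?_⟩
  · rw [hr, add_sub_cancel_right]
    exact sum_mem fun b _ => Ideal.mul_mem_left _ _ (Ideal.subset_span b.2)
  · have hx := hle x
    have hdisj : x ∈ _ → x ∉ _ := (Finset.disjoint_left.mp (hgB b hb) ·)
    rw [degree_mul_of_isUnit hg h0, Finsupp.add_apply] at hx
    simp only [Finsupp.mem_support_iff] at hdisj
    lia

lemma IsGroebner.mem_span_of_mul_mem (h : IsGroebner m B)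
    (hB : ∀ b ∈ B, IsUnit (m.leadingCoeff b)) (hg : IsUnit (m.leadingCoeff g))
    (hgB : ∀ b ∈ B, Disjoint (m.degree g).support (m.degree b).support) {r : MvPolynomial σ R}
    (hr : g * r ∈ Ideal.span B) : r ∈ Ideal.span B := by
  obtain ⟨r', hrr', hr'⟩ := exists_sub_mem_span hB hg hgB r
  obtain rfl : r' = 0 := by
    by_contra h0
    have hmem : g * r' ∈ Ideal.span B := by
      have := sub_mem hr (Ideal.mul_mem_left _ g hrr')
      rwa [← mul_sub, sub_sub_cancel] at this
    obtain ⟨b, hb, hle⟩ := h _ hmem (mul_ne_zero_of_isUnit hg h0)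
    exact hr' h0 b hb hle
  rwa [sub_zero] at hrr'

lemma IsGroebner.insert (h : IsGroebner m B) (hB : ∀ b ∈ B, IsUnit (m.leadingCoeff b))
    (hg : IsUnit (m.leadingCoeff g))
    (hgB : ∀ b ∈ B, Disjoint (m.degree g).support (m.degree b).support) :
    IsGroebner m (insert g B) := by
  intro f hf hf0
  obtain ⟨r, z, hz, rfl⟩ := Ideal.mem_span_insert.mp hf
  obtain ⟨r', hrr', hr'⟩ := exists_sub_mem_span hB hg hgB r
  obtain ⟨w, hw, hrw⟩ : ∃ w ∈ Ideal.span B, r * g + z = g * r' + w :=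
    ⟨(r - r') * g + z, add_mem (Ideal.mul_mem_right _ _ hrr') hz, by ring⟩
  rw [hrw] at hf0 ⊢
  have hg_le (hr0 : r' ≠ 0) : m.degree g ≤ m.degree (g * r') :=
    (degree_mul_of_isUnit hg hr0).symm ▸ le_self_add
  by_cases hr0 : r' = 0
  · rw [hr0, mul_zero, zero_add] at hf0 ⊢
    obtain ⟨b, hb, hle⟩ := h w hw hf0
    exact ⟨b, Set.mem_insert_of_mem _ hb, hle⟩
  by_cases hw0 : w = 0
  · exact ⟨g, Set.mem_insert _ _, by rw [hw0, add_zero]; exact hg_le hr0⟩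
  obtain ⟨b, hb, hle⟩ := h w hw hw0
  have hne : m.degree (g * r') ≠ m.degree w := fun heq => hr' hr0 b hb (heq ▸ hle)
  have hsup := m.degree_add_of_ne hne
  rcases max_choice (m.toSyn (m.degree (g * r'))) (m.toSyn (m.degree w)) with hmax | hmax <;>
    rw [hmax, m.toSyn.injective.eq_iff] at hsup <;> rw [hsup]
  · exact ⟨g, Set.mem_insert _ _, hg_le hr0⟩
  · exact ⟨b, Set.mem_insert_of_mem _ hb, hle⟩

lemma isGroebner_image {τ : Type*} {g : τ → MvPolynomial σ R}
    (hg : ∀ i, IsUnit (m.leadingCoeff (g i)))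
    (hdisj : Pairwise fun i j => Disjoint (m.degree (g i)).support (m.degree (g j)).support)
    (s : Finset τ) : IsGroebner m (g '' s) := by
  classical
  induction s using Finset.induction_on with
  | empty => intro f hf hf0; simp_all
  | insert i s hi ih =>
    rw [Finset.coe_insert, Set.image_insert_eq]
    refine ih.insert (Set.forall_mem_image.mpr fun j _ => hg j) (hg i)
      (Set.forall_mem_image.mpr fun j hj => hdisj ?_)
    rintro rfl
    exact hi hj

theorem isWeaklyRegular_ofFn_of_pairwise_disjoint {n : ℕ} {g : Fin n → MvPolynomial σ R}
    (hg : ∀ i, IsUnit (m.leadingCoeff (g i)))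
    (hdisj : Pairwise fun i j => Disjoint (m.degree (g i)).support (m.degree (g j)).support) :
    IsWeaklyRegular (MvPolynomial σ R) (List.ofFn g) := by
  refine isWeaklyRegular_ofFn_iff.mpr fun i r hr => ?_
  rw [← Finset.coe_Iio] at hr ⊢
  exact (isGroebner_image hg hdisj _).mem_span_of_mul_mem
    (Set.forall_mem_image.mpr fun j _ => hg j) (hg i)
    (Set.forall_mem_image.mpr fun j hj => hdisj (Finset.mem_Iio.mp hj).ne') hr

end MonomialOrder

section Generic

open RingTheory.Sequence
open scoped MonomialOrder

universe u

lemma exists_eliminationOrder {σ : Type u} [Finite σ] (D : Set σ) :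
    ∃ m : MonomialOrder.{u, u} σ, ∀ c d : σ →₀ ℕ,
      (∀ s ∈ D, c s = 0) → (∃ s ∈ D, d s ≠ 0) → c ≺[m] d := by
  classical
  obtain ⟨k, ⟨e⟩⟩ := Finite.exists_equiv_fin σ
  let _ : LinearOrder σ := .lift' (fun s => toLex (decide (s ∉ D), e s)) fun s t hst =>
    e.injective (Prod.ext_iff.mp hst).2
  refine ⟨.lex, fun c d hc ⟨s, hs, hds⟩ => lt_of_not_ge fun hle => ?_⟩
  obtain heq | ⟨i, hlt, hi⟩ := (MonomialOrder.lex_le_iff.mp hle).eq_or_lt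
  · exact hds ((DFunLike.congr_fun (toLex.injective heq) s).trans (hc s hs))
  · have hiD : i ∉ D := fun h => (hc i h ▸ hi).not_ge zero_le
    have hsi : s < i := Prod.Lex.toLex_lt_toLex.mpr (Or.inl (by simp [hs, hiD]))
    exact hds ((hlt s hsi).trans (hc s hs))

variable (n : ℕ) (K : Type*) [CommRing K]

/-- The coordinate ring `K[x i j, y j]` of a generic square matrix `x` and a generic vector `y`. -/
abbrev GenericRing : Type _ := MvPolynomial ((Fin n × Fin n) ⊕ Fin n) K

/-- The generic square matrix `x`. -/
noncomputable def genericMatrix : Matrix (Fin n) (Fin n) (GenericRing n K) :=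
  Matrix.of fun i j => X (Sum.inl (i, j))

/-- The generic vector `y`. -/
noncomputable def genericVector : Fin n → GenericRing n K := fun j => X (Sum.inr j)

lemma isWeaklyRegular_genericVector :
    IsWeaklyRegular (GenericRing n K) (List.ofFn (genericVector n K)) := by
  obtain _ | _ := subsingleton_or_nontrivial K
  · exact isWeaklyRegular_ofFn_iff.mpr fun i r _ => Subsingleton.elim 0 r ▸ zero_mem _
  obtain ⟨m, -⟩ := exists_eliminationOrder (∅ : Set ((Fin n × Fin n) ⊕ Fin n))
  refine isWeaklyRegular_ofFn_of_pairwise_disjoint (m := m) (fun i => ?_) fun i j hij => ?_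
  · rw [genericVector, m.leadingCoeff_X]
    exact isUnit_one
  · simpa [genericVector, m.degree_X] using hij

lemma genericMatrix_mul_genericVector (i j : Fin n) :
    genericMatrix n K i j * genericVector n K j =
      monomial (Finsupp.single (Sum.inl (i, j)) 1 + Finsupp.single (Sum.inr j) 1) 1 := by
  rw [← mul_one (1 : K), ← monomial_mul]
  rfl

lemma exists_monomialOrder_genericMatrix_mulVec [Nontrivial K] :
    ∃ m : MonomialOrder.{0, 0} ((Fin n × Fin n) ⊕ Fin n),
      ∀ i, m.leadingCoeff ((genericMatrix n K *ᵥ genericVector n K) i) = 1 ∧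
        m.degree ((genericMatrix n K *ᵥ genericVector n K) i) =
          Finsupp.single (Sum.inl (i, i)) 1 + Finsupp.single (Sum.inr i) 1 := by
  classical
  obtain ⟨m, hm⟩ := exists_eliminationOrder
    (Set.range fun i : Fin n => (Sum.inl (i, i) : (Fin n × Fin n) ⊕ Fin n))
  refine ⟨m, fun i => ?_⟩
  have hdeg (j : Fin n) : m.degree (genericMatrix n K i j * genericVector n K j) =
      Finsupp.single (Sum.inl (i, j)) 1 + Finsupp.single (Sum.inr j) 1 := by
    rw [genericMatrix_mul_genericVector, m.degree_monomial, if_neg one_ne_zero]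
  have hlt : m.degree (∑ j ∈ Finset.univ.erase i, genericMatrix n K i j * genericVector n K j) ≺[m]
      m.degree (genericMatrix n K i i * genericVector n K i) := by
    refine m.degree_sum_le.trans_lt ((Finset.sup_lt_iff ?_).mpr fun j hj => ?_)
    · rw [m.bot_eq_zero, ← map_zero m.toSyn]
      exact hm _ _ (fun _ _ => rfl) ⟨_, Set.mem_range_self i, by simp [hdeg]⟩
    · refine hm _ _ (Set.forall_mem_range.mpr fun k => ?_) ⟨_, Set.mem_range_self i, by simp [hdeg]⟩
      have hij : j ≠ i := Finset.ne_of_mem_erase hj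
      simp only [hdeg, Finsupp.add_apply, Finsupp.single_apply, Sum.inl.injEq, Prod.mk.injEq,
        reduceCtorEq]
      grind
  have hsplit : (genericMatrix n K *ᵥ genericVector n K) i =
      genericMatrix n K i i * genericVector n K i +
        ∑ j ∈ Finset.univ.erase i, genericMatrix n K i j * genericVector n K j :=
    (Finset.add_sum_erase _ _ (Finset.mem_univ i)).symm
  rw [hsplit, m.leadingCoeff_add_of_lt hlt, m.degree_add_of_lt hlt, hdeg,
    genericMatrix_mul_genericVector, m.leadingCoeff_monomial]
  exact ⟨rfl, rfl⟩

lemma isWeaklyRegular_genericMatrix_mulVec :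
    IsWeaklyRegular (GenericRing n K)
      (List.ofFn (genericMatrix n K *ᵥ genericVector n K)) := by
  obtain _ | _ := subsingleton_or_nontrivial K
  · exact isWeaklyRegular_ofFn_iff.mpr fun i r _ => Subsingleton.elim 0 r ▸ zero_mem _
  obtain ⟨m, hm⟩ := exists_monomialOrder_genericMatrix_mulVec n K
  refine isWeaklyRegular_ofFn_of_pairwise_disjoint (m := m)
    (fun i => (hm i).1 ▸ isUnit_one) fun i j hij => ?_
  simp only [(hm _).2, Finset.disjoint_left, Finsupp.mem_support_iff, Finsupp.add_apply,
    Finsupp.single_apply]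
  rintro (⟨k, l⟩ | k) <;> grind

lemma det_genericMatrix_mem_nonZeroDivisors :
    (genericMatrix n K).det ∈ nonZeroDivisors (GenericRing n K) := by
  -- `φ` substitutes `T + x` for the matrix `x`, and thereby turns its determinant into a monic
  -- polynomial in the new variable `T`.
  let φ : GenericRing n K →ₐ[K] Polynomial (GenericRing n K) :=
    aeval (Sum.elim (fun p => (-genericMatrix n K).charmatrix p.1 p.2) fun j => .C (X (Sum.inr j)))
  have hφ (r) : (φ r).eval 0 = r := by
    suffices h : ((Polynomial.aeval (0 : GenericRing n K)).restrictScalars K).comp φ = .id K _ by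
      simpa [Polynomial.coe_aeval_eq_eval] using DFunLike.congr_fun h r
    ext (⟨i, j⟩ | j) : 1
    · obtain rfl | hij := eq_or_ne i j <;> simp [φ, charmatrix_apply, genericMatrix, *]
    · simp [φ]
  have hdet : φ (genericMatrix n K).det = (-genericMatrix n K).charpoly := by
    rw [AlgHom.map_det]
    congr 1
    ext i j
    simp [φ, genericMatrix]
  refine mem_nonZeroDivisors_iff_left.mpr fun r hr => ?_
  have hφr : φ r = 0 := (charpoly_monic (-genericMatrix n K)).mem_nonZeroDivisors.1 _ <| by
    rw [← hdet, ← map_mul, hr, map_zero]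
  rw [← hφ r, hφr, Polynomial.eval_zero]

variable {n K}

lemma mem_span_range_genericVector {r : GenericRing n K}
    (hr : aeval (Sum.elim (fun p => X (Sum.inl p)) 0) r = (0 : GenericRing n K)) :
    r ∈ Ideal.span (Set.range (genericVector n K)) := by
  set I := Ideal.span (Set.range (genericVector n K))
  have hmk : Ideal.Quotient.mkₐ K I =
      (Ideal.Quotient.mkₐ K I).comp (aeval (Sum.elim (fun p => X (Sum.inl p)) 0)) := by
    ext (p | j)
    · simp
    · have hy : genericVector n K j ∈ I := Ideal.subset_span (Set.mem_range_self j)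
      simpa [Ideal.Quotient.eq_zero_iff_mem, genericVector] using hy
  rw [← Ideal.Quotient.eq_zero_iff_mem, ← Ideal.Quotient.mkₐ_eq_mk K, hmk, AlgHom.comp_apply, hr,
    map_zero]

lemma mem_span_range_genericVector_of_det_mul_mem {r : GenericRing n K}
    (hr : (genericMatrix n K).det * r ∈
      Ideal.span (Set.range (genericMatrix n K *ᵥ genericVector n K))) :
    r ∈ Ideal.span (Set.range (genericVector n K)) := by
  let ψ : GenericRing n K →ₐ[K] GenericRing n K := aeval (Sum.elim (fun p => X (Sum.inl p)) 0)
  have hψ : Ideal.span (Set.range (genericMatrix n K *ᵥ genericVector n K)) ≤ RingHom.ker ψ := by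
    rw [Ideal.span_le, Set.range_subset_iff]
    intro i
    simp [RingHom.mem_ker, mulVec, dotProduct, genericVector, ψ]
  have hdet : ψ (genericMatrix n K).det = (genericMatrix n K).det := by
    rw [AlgHom.map_det]
    congr 1
    ext1 i j
    simp [ψ, genericMatrix]
  refine mem_span_range_genericVector
    (det_genericMatrix_mem_nonZeroDivisors n K |>.1 (ψ r) ?_)
  rw [← hdet, ← map_mul]
  exact hψ hr

end Generic

end Northcott

theorem betti_numbers_generic_northcott_general
    {K : Type*} [CommRing K] (n : ℕ) (hn : 1 ≤ n)
    (Xv : Fin n → Fin n → MvPolynomial ((Fin n × Fin n) ⊕ Fin n) K)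
    (yv : Fin n → MvPolynomial ((Fin n × Fin n) ⊕ Fin n) K)
    (hX : ∀ i j, Xv i j = MvPolynomial.X (Sum.inl (i, j)))
    (hy : ∀ j, yv j = MvPolynomial.X (Sum.inr j))
    (g : Fin n → MvPolynomial ((Fin n × Fin n) ⊕ Fin n) K)
    (hg : ∀ i, g i = ∑ j, Xv i j * yv j) :
    IsMinimalFreeRes (Ideal.span (Set.range (MvPolynomial.X :
        ((Fin n × Fin n) ⊕ Fin n) → MvPolynomial ((Fin n × Fin n) ⊕ Fin n) K)))
      (MvPolynomial ((Fin n × Fin n) ⊕ Fin n) K ⧸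
        Ideal.span (insert (Matrix.of Xv).det (Set.range g)))
      (fun i => if i = 0 then 1 else if i = n then n
        else if i < n then n.choose (i - 1) + n.choose i else 0) := by
  have hX' : Matrix.of Xv = Northcott.genericMatrix n K := by
    ext1 i j
    exact hX i j
  obtain rfl : yv = Northcott.genericVector n K := funext hy
  obtain rfl : g = Northcott.genericMatrix n K *ᵥ Northcott.genericVector n K :=
    funext fun i => (hg i).trans (by rw [← hX']; rfl)
  rw [hX']
  exact Northcott.isMinimalFreeRes_quotient_span_insert_det hn
    (fun i j => Ideal.subset_span (Set.mem_range_self (Sum.inl (i, j))))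
    (fun j => Ideal.subset_span (Set.mem_range_self (Sum.inr j)))
    (Northcott.isWeaklyRegular_genericVector n K)
    (Northcott.isWeaklyRegular_genericMatrix_mulVec n K)
    fun _ => Northcott.mem_span_range_genericVector_of_det_mul_mem

/-- With `R = K[x i j, y j]`, `g i = ∑ j x i j * y j`, and `Δ = det X`, the ideal
`⟨g 1, …, g n, Δ⟩` has total Betti numbers `β 0 = 1`,
`β i = n.choose (i−1) + n.choose i` for `1 ≤ i ≤ n−1`, and `β n = n`. -/
theorem betti_numbers_generic_northcott
    {K : Type*} [Field K] (n : ℕ) (hn : 1 ≤ n)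
    (Xv : Fin n → Fin n → MvPolynomial ((Fin n × Fin n) ⊕ Fin n) K)
    (yv : Fin n → MvPolynomial ((Fin n × Fin n) ⊕ Fin n) K)
    (hX : ∀ i j, Xv i j = MvPolynomial.X (Sum.inl (i, j)))
    (hy : ∀ j, yv j = MvPolynomial.X (Sum.inr j))
    (g : Fin n → MvPolynomial ((Fin n × Fin n) ⊕ Fin n) K)
    (hg : ∀ i, g i = ∑ j, Xv i j * yv j) :
    IsMinimalFreeRes (Ideal.span (Set.range (MvPolynomial.X :
        ((Fin n × Fin n) ⊕ Fin n) → MvPolynomial ((Fin n × Fin n) ⊕ Fin n) K)))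
      (MvPolynomial ((Fin n × Fin n) ⊕ Fin n) K ⧸
        Ideal.span (insert (Matrix.of Xv).det (Set.range g)))
      (fun i => if i = 0 then 1 else if i = n then n
        else if i < n then n.choose (i - 1) + n.choose i else 0) :=
  betti_numbers_generic_northcott_general n hn Xv yv hX hy g hg
end

section
/- Let X̂ be the (n+1)×n generic matrix, Y the generic n×1 column over a field K, and J = I_1(X̂Y) = ⟨g_1, ..., g_{n+1}⟩ ⊆ R̂ = K[x_{ij}, y_j]. Then the total Betti numbers of R̂/J are β_0 = 1, β_1 = n+1, β_{k+1} = C(n,k) + C(n,k−1) + C(n,k+1) for 1 ≤ k < n, and β_{n+1} = n. -/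
open MvPolynomial Matrix

/-!
Write `g = Xy`. Multiplication by `y` on `Λ(Rⁿ)` and by `g` on `Λ(Rⁿ⁺¹)` are cohomological Koszul
complexes, and `ΛX` is a morphism from the first to the second. After cancelling the two copies of
`Λ⁰`, its mapping cone is the minimal free resolution of `R ⧸ (g)`.

Exactness of the cone rests on two facts about the Koszul complex of `g`: it is exact in exterior
degrees below `n`, and in degree `n` its cohomology is generated by the vector of maximal minors of
`X`, that is, by the image of the volume element of `Rⁿ`. Both come from adding one row at a time:
the new form is linear in the entry `x₀₀`, with leading coefficient `y₀`, so that multiplying by it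
is controlled by multiplying by `y₀`; and reducing modulo `y₀` removes a column of `X`.
-/

namespace BettiI1XY

open ExteriorAlgebra hiding map
open CliffordAlgebra (contractLeft contractLeft_ι_mul contractLeft_algebraMap)

section ExteriorAlgebra

variable {R M N : Type*} [CommRing R] [AddCommGroup M] [Module R M] [AddCommGroup N] [Module R N]

theorem ι_mul_mem_exteriorPower (z : M) {k : ℕ} {u : ExteriorAlgebra R M} (hu : u ∈ ⋀[R]^k M) :
    ι R z * u ∈ ⋀[R]^(k + 1) M := by
  rw [exteriorPower, pow_succ']
  exact Submodule.mul_mem_mul (LinearMap.mem_range_self _ z) hu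

theorem exteriorPower_succ_induction {k : ℕ}
    {P : (u : ExteriorAlgebra R M) → u ∈ ⋀[R]^(k + 1) M → Prop}
    (ι_mul : ∀ z u, ∀ hu : u ∈ ⋀[R]^k M, P (ι R z * u)
      (ι_mul_mem_exteriorPower z hu))
    (add : ∀ u hu v hv, P u hu → P v hv → P (u + v) (add_mem hu hv)) {u : ExteriorAlgebra R M}
    (hu : u ∈ ⋀[R]^(k + 1) M) : P u hu := by
  rw [exteriorPower, pow_succ'] at hu
  refine Submodule.mul_induction_on' (C := fun u hu => P u (by rwa [exteriorPower, pow_succ']))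
    ?_ (fun u hu v hv => add u _ v _) hu
  rintro _ ⟨z, rfl⟩ u hu
  exact ι_mul z u hu

theorem map_mem_exteriorPower (f : M →ₗ[R] N) {k : ℕ} {u : ExteriorAlgebra R M}
    (hu : u ∈ ⋀[R]^k M) : ExteriorAlgebra.map f u ∈ ⋀[R]^k N := by
  induction k generalizing u with
  | zero =>
    obtain ⟨r, rfl⟩ := Submodule.mem_one.1 hu
    rw [AlgHom.commutes]
    exact Submodule.mem_one.2 ⟨r, rfl⟩
  | succ k ih =>
    induction hu using exteriorPower_succ_induction with
    | ι_mul z u hu =>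
      rw [map_mul, map_apply_ι]
      exact ι_mul_mem_exteriorPower _ (ih hu)
    | add u _ v _ hu hv => simpa only [map_add] using add_mem hu hv

theorem exists_mem_exteriorPower_ι_mul_eq (z : M) {k : ℕ} {s : ExteriorAlgebra R M}
    (hs : ι R z * s ∈ ⋀[R]^(k + 1) M) :
    ∃ t ∈ ⋀[R]^k M, ι R z * s = ι R z * t := by
  have hz : ι R z ∈ ⋀[R]^1 M := by simp [exteriorPower]
  refine ⟨DirectSum.decompose (fun i => ⋀[R]^i M) s k, SetLike.coe_mem _, ?_⟩
  rw [← DirectSum.coe_decompose_mul_add_of_left_mem (fun i => ⋀[R]^i M) hz, add_comm 1 k,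
    DirectSum.decompose_of_mem_same (fun i => ⋀[R]^i M) hs]

theorem ι_mul_eq_zero_of_mem_exteriorPower_zero (z : M) {s : ExteriorAlgebra R M}
    (hs : ι R z * s ∈ ⋀[R]^0 M) : ι R z * s = 0 := by
  have hz : ι R z ∈ ⋀[R]^1 M := by simp [exteriorPower]
  rw [← DirectSum.decompose_of_mem_same (fun i => ⋀[R]^i M) hs]
  exact DirectSum.coe_decompose_mul_of_left_mem_of_not_le (fun i => ⋀[R]^i M) hz (by lia)

theorem ι_mul_ι_mul_self (z : M) (u : ExteriorAlgebra R M) :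
    ι R z * (ι R z * u) = 0 := by
  rw [← mul_assoc, ExteriorAlgebra.ι_sq_zero, zero_mul]

theorem ι_mul_ι_mul_swap (y z : M) (u : ExteriorAlgebra R M) :
    ι R y * (ι R z * u) =
      -(ι R z * (ι R y * u)) := by
  rw [← mul_assoc, ← mul_assoc, eq_neg_iff_add_eq_zero, ← add_mul, ι_add_mul_swap, zero_mul]

theorem contractLeft_eq_zero_of_mem_exteriorPower_zero (d : Module.Dual R M)
    {u : ExteriorAlgebra R M} (hu : u ∈ ⋀[R]^0 M) : contractLeft d u = 0 := by
  obtain ⟨r, rfl⟩ := Submodule.mem_one.1 hu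
  exact contractLeft_algebraMap 0 d r

theorem contractLeft_mem_exteriorPower (d : Module.Dual R M) {k : ℕ} {u : ExteriorAlgebra R M}
    (hu : u ∈ ⋀[R]^(k + 1) M) : contractLeft d u ∈ ⋀[R]^k M := by
  induction k generalizing u with
  | zero =>
    induction hu using exteriorPower_succ_induction with
    | ι_mul z u hu =>
      rw [contractLeft_ι_mul, contractLeft_eq_zero_of_mem_exteriorPower_zero d hu, mul_zero,
        sub_zero]
      exact Submodule.smul_mem _ _ hu
    | add u _ v _ hu hv => simpa only [map_add] using add_mem hu hv
  | succ k ih =>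
    induction hu using exteriorPower_succ_induction with
    | ι_mul z u hu =>
      rw [contractLeft_ι_mul]
      exact sub_mem (Submodule.smul_mem _ _ hu) (ι_mul_mem_exteriorPower z (ih hu))
    | add u _ v _ hu hv => simpa only [map_add] using add_mem hu hv

theorem ι_mul_mem_smul_exteriorPower {I : Ideal R} {z : M} (hz : z ∈ I • (⊤ : Submodule R M))
    {k : ℕ} {u : ExteriorAlgebra R M} (hu : u ∈ ⋀[R]^k M) :
    ι R z * u ∈ I • (⋀[R]^(k + 1) M) := by
  induction hz using Submodule.smul_induction_on' with
  | smul r hr z _ =>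
    rw [map_smul, smul_mul_assoc]
    exact Submodule.smul_mem_smul hr (ι_mul_mem_exteriorPower z hu)
  | add y _ z _ hy hz => simpa only [map_add, add_mul] using add_mem hy hz

theorem map_mem_smul_exteriorPower {I : Ideal R} {f : M →ₗ[R] N}
    (hf : ∀ z, f z ∈ I • (⊤ : Submodule R N)) {k : ℕ} {u : ExteriorAlgebra R M}
    (hu : u ∈ ⋀[R]^(k + 1) M) : ExteriorAlgebra.map f u ∈ I • (⋀[R]^(k + 1) N) := by
  induction hu using exteriorPower_succ_induction with
  | ι_mul z u hu =>
    rw [map_mul, map_apply_ι]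
    exact ι_mul_mem_smul_exteriorPower (hf z) (map_mem_exteriorPower f hu)
  | add u _ v _ hu hv => simpa only [map_add] using add_mem hu hv

end ExteriorAlgebra

section FreeModule

variable {R : Type*} [CommRing R] {m n : ℕ}

theorem mem_smul_top_of_forall_mem {I : Ideal R} {z : Fin m → R} (hz : ∀ i, z i ∈ I) :
    z ∈ I • (⊤ : Submodule R (Fin m → R)) := by
  rw [pi_eq_sum_univ z]
  exact sum_mem fun i _ => Submodule.smul_mem_smul (hz i) trivial

theorem nonempty_exteriorPower_equiv (m k : ℕ) :
    Nonempty (⋀[R]^k (Fin m → R) ≃ₗ[R] (Fin (m.choose k) → R)) := by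
  refine ⟨((Pi.basisFun R (Fin m)).exteriorPower k).reindex
    (Finite.equivFinOfCardEq ?_) |>.equivFun⟩
  rw [Set.powersetCard.card, Nat.card_fin]

theorem eq_zero_of_mem_exteriorPower_of_lt {k : ℕ} (hk : m < k)
    {u : ExteriorAlgebra R (Fin m → R)} (hu : u ∈ ⋀[R]^k (Fin m → R)) : u = 0 := by
  obtain ⟨e⟩ := nonempty_exteriorPower_equiv (R := R) m k
  rw [Nat.choose_eq_zero_of_lt hk] at e
  exact congrArg Subtype.val (e.toEquiv.subsingleton.elim ⟨u, hu⟩ 0)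

/-- The projection `Λ(Rᵐ⁺¹) → Λ(Rᵐ)` killing the first basis vector. -/
noncomputable def tailPart (R : Type*) [CommRing R] (m : ℕ) :
    ExteriorAlgebra R (Fin (m + 1) → R) →ₐ[R] ExteriorAlgebra R (Fin m → R) :=
  ExteriorAlgebra.map (LinearMap.funLeft R R Fin.succ)

/-- The factor `b` in the decomposition `u = a + e₀ ∧ b` of an element of `Λ(Rᵐ⁺¹)`, where `a` and
`b` do not involve `e₀`. -/
noncomputable def headPart (R : Type*) [CommRing R] (m : ℕ) :
    ExteriorAlgebra R (Fin (m + 1) → R) →ₗ[R] ExteriorAlgebra R (Fin m → R) :=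
  (tailPart R m).toLinearMap ∘ₗ contractLeft (LinearMap.proj 0)

/-- The inclusion `Λ(Rᵐ) → Λ(Rᵐ⁺¹)` shifting every basis vector by one. -/
noncomputable def consZero (R : Type*) [CommRing R] (m : ℕ) :
    ExteriorAlgebra R (Fin m → R) →ₐ[R] ExteriorAlgebra R (Fin (m + 1) → R) :=
  ExteriorAlgebra.map (LinearMap.vecCons 0 LinearMap.id)

theorem tailPart_ι_mul (g : Fin (m + 1) → R) (u : ExteriorAlgebra R (Fin (m + 1) → R)) :
    tailPart R m (ι R g * u) =
      ι R (Fin.tail g) * tailPart R m u := by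
  rw [map_mul, tailPart, map_apply_ι]
  rfl

theorem headPart_ι_mul (g : Fin (m + 1) → R) (u : ExteriorAlgebra R (Fin (m + 1) → R)) :
    headPart R m (ι R g * u) =
      g 0 • tailPart R m u - ι R (Fin.tail g) * headPart R m u := by
  rw [headPart, LinearMap.comp_apply, ExteriorAlgebra.ι, contractLeft_ι_mul, map_sub, map_smul]
  exact congrArg _ (tailPart_ι_mul g _)

theorem ι_tail_mul_headPart_of_ι_mul_eq_zero {g : Fin (m + 1) → R}
    {u : ExteriorAlgebra R (Fin (m + 1) → R)} (hu : ι R g * u = 0) :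
    ι R (Fin.tail g) * headPart R m u = g 0 • tailPart R m u := by
  rw [eq_comm, ← sub_eq_zero, ← headPart_ι_mul, hu, map_zero]

theorem headPart_mem_exteriorPower {k : ℕ} {u : ExteriorAlgebra R (Fin (m + 1) → R)}
    (hu : u ∈ ⋀[R]^(k + 1) (Fin (m + 1) → R)) : headPart R m u ∈ ⋀[R]^k (Fin m → R) :=
  map_mem_exteriorPower _ (contractLeft_mem_exteriorPower _ hu)

theorem ι_eq_consZero_add (g : Fin (m + 1) → R) :
    ι R g = consZero R m (ι R (Fin.tail g)) +
      g 0 • ι R (Pi.single 0 1) := by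
  rw [consZero, map_apply_ι, ← map_smul, ← map_add]
  congr 1
  ext i
  cases i using Fin.cases <;> simp [Fin.tail]

theorem consZero_ι_mul_ι_mul_swap (g : Fin m → R) (z : Fin (m + 1) → R)
    (u : ExteriorAlgebra R (Fin (m + 1) → R)) :
    consZero R m (ι R g) * (ι R z * u) = -(ι R z * (consZero R m (ι R g) * u)) := by
  rw [consZero, map_apply_ι, ι_mul_ι_mul_swap]

theorem consZero_tailPart_add (u : ExteriorAlgebra R (Fin (m + 1) → R)) :
    consZero R m (tailPart R m u) +
      ι R (Pi.single 0 1) * consZero R m (headPart R m u) = u := by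
  induction u using CliffordAlgebra.left_induction with
  | algebraMap r => simp [headPart, contractLeft_algebraMap]
  | add u v hu hv =>
    conv_rhs => rw [← hu, ← hv]
    simp only [map_add, mul_add]
    abel
  | ι_mul u g hu =>
    change consZero R m (tailPart R m (ι R g * u)) + ι R _ *
      consZero R m (headPart R m (ι R g * u)) = ι R g * u
    conv_rhs => rw [← hu, ι_eq_consZero_add g]
    rw [tailPart_ι_mul, headPart_ι_mul]
    simp only [map_mul, map_sub, map_smul, mul_sub, add_mul, mul_add, smul_mul_assoc,
      mul_smul_comm, ι_mul_ι_mul_self, consZero_ι_mul_ι_mul_swap, smul_zero]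
    abel

/-- The volume element `e₀ ∧ ⋯ ∧ e₍ₘ₋₁₎` of the exterior algebra of `Rᵐ`. -/
noncomputable def volume (R : Type*) [CommRing R] (m : ℕ) : ExteriorAlgebra R (Fin m → R) :=
  ιMulti R m (Pi.basisFun R (Fin m))

/-- The coefficient of the volume element in an element of the exterior algebra of `Rᵐ`. -/
noncomputable def topCoeff (R : Type*) [CommRing R] (m : ℕ) :
    ExteriorAlgebra R (Fin m → R) →ₗ[R] R :=
  liftAlternating (Pi.single m Matrix.detRowAlternating)

theorem volume_mem_exteriorPower : volume R m ∈ ⋀[R]^m (Fin m → R) :=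
  ιMulti_range R m ⟨_, rfl⟩

theorem volume_succ :
    volume R (m + 1) = ι R (Pi.single 0 1) * consZero R m (volume R m) := by
  rw [volume, ιMulti_succ_apply, volume, consZero, map_apply_ιMulti]
  congr 2
  · simp
  · ext i j
    cases j using Fin.cases <;> simp [vecTail, Pi.single_apply]

theorem topCoeff_ιMulti (v : Fin m → Fin m → R) :
    topCoeff R m (ιMulti R m v) = (Matrix.of v).det := by
  rw [topCoeff, liftAlternating_apply_ιMulti, Pi.single_eq_same]
  rfl

theorem topCoeff_volume : topCoeff R m (volume R m) = 1 := by
  rw [volume, topCoeff_ιMulti, ← Matrix.det_one (n := Fin m)]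
  congr 1
  ext i j
  simp [Matrix.one_apply, Pi.single_apply, eq_comm]

theorem exists_eq_smul_volume {u : ExteriorAlgebra R (Fin m → R)}
    (hu : u ∈ ⋀[R]^m (Fin m → R)) : ∃ c : R, u = c • volume R m := by
  induction m with
  | zero =>
    obtain ⟨r, rfl⟩ := Submodule.mem_one.1 hu
    exact ⟨r, by simp [volume, Algebra.algebraMap_eq_smul_one]⟩
  | succ m ih =>
    have htail : tailPart R m u = 0 :=
      eq_zero_of_mem_exteriorPower_of_lt m.lt_succ_self (map_mem_exteriorPower _ hu)
    obtain ⟨c, hc⟩ := ih (headPart_mem_exteriorPower hu)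
    refine ⟨c, ?_⟩
    rw [← consZero_tailPart_add u, htail, hc, map_zero, zero_add, map_smul, mul_smul_comm,
      volume_succ]

theorem topCoeff_smul_volume {u : ExteriorAlgebra R (Fin m → R)}
    (hu : u ∈ ⋀[R]^m (Fin m → R)) : topCoeff R m u • volume R m = u := by
  obtain ⟨c, rfl⟩ := exists_eq_smul_volume hu
  rw [map_smul, topCoeff_volume, smul_eq_mul, mul_one]

theorem topCoeff_map (A : Matrix (Fin m) (Fin m) R) {u : ExteriorAlgebra R (Fin m → R)}
    (hu : u ∈ ⋀[R]^m (Fin m → R)) :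
    topCoeff R m (ExteriorAlgebra.map A.mulVecLin u) = A.det * topCoeff R m u := by
  rw [← topCoeff_smul_volume hu, map_smul, map_smul, map_smul, topCoeff_volume, volume,
    map_apply_ιMulti, topCoeff_ιMulti, ← A.det_transpose, smul_eq_mul, smul_eq_mul, mul_one,
    mul_comm]
  congr 2
  ext i j
  simp

theorem topCoeff_ι_mul_mem {I : Ideal R} {z : Fin m → R} (hz : ∀ i, z i ∈ I)
    (u : ExteriorAlgebra R (Fin m → R)) : topCoeff R m (ι R z * u) ∈ I := by
  refine Submodule.smul_induction_on (p := fun z => topCoeff R m (ι R z * u) ∈ I)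
    (mem_smul_top_of_forall_mem hz) (fun r hr z _ => ?_) fun y z hy hz => ?_
  · rw [map_smul, smul_mul_assoc, map_smul]
    exact Ideal.mul_mem_right _ _ hr
  · simpa only [map_add, add_mul] using add_mem hy hz

theorem topCoeff_ι_mul_mem_span (g : Fin m → R) (u : ExteriorAlgebra R (Fin m → R)) :
    topCoeff R m (ι R g * u) ∈ Ideal.span (Set.range g) :=
  topCoeff_ι_mul_mem (fun i => Ideal.subset_span (Set.mem_range_self i)) u

theorem ι_mul_volume (z : Fin m → R) : ι R z * volume R m = 0 :=
  eq_zero_of_mem_exteriorPower_of_lt m.lt_succ_self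
    (ι_mul_mem_exteriorPower z volume_mem_exteriorPower)

theorem ι_mul_contractLeft_volume (g : Fin m → R) (d : Module.Dual R (Fin m → R)) :
    ι R g * contractLeft d (volume R m) = d g • volume R m := by
  have h := contractLeft_ι_mul (Q := 0) d g (volume R m)
  rw [show CliffordAlgebra.ι 0 g * volume R m = 0 from ι_mul_volume g, map_zero, eq_comm,
    sub_eq_zero] at h
  exact h.symm

theorem topCoeff_ι_mul_contractLeft_volume (g : Fin m → R) (d : Module.Dual R (Fin m → R)) :
    topCoeff R m (ι R g * contractLeft d (volume R m)) = d g := by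
  rw [ι_mul_contractLeft_volume, map_smul, topCoeff_volume, smul_eq_mul, mul_one]

theorem exists_eq_ι_mul_of_topCoeff_mem_span {g : Fin m → R} {u : ExteriorAlgebra R (Fin m → R)}
    (hu : u ∈ ⋀[R]^m (Fin m → R)) (h : topCoeff R m u ∈ Ideal.span (Set.range g)) :
    ∃ v, u = ι R g * v := by
  obtain ⟨c, hc⟩ := (Submodule.mem_span_range_iff_exists_fun R).1 h
  refine ⟨contractLeft (Fintype.linearCombination R c) (volume R m), ?_⟩
  rw [ι_mul_contractLeft_volume, ← topCoeff_smul_volume hu, ← hc]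
  simp [Fintype.linearCombination_apply, mul_comm]

end FreeModule

section Koszul

variable {R : Type*} [CommRing R] {m n : ℕ}

/-- The cohomological Koszul complex `(Λ(Rⁿ), y ∧ ·)` is exact in all degrees below `n`; over a
Noetherian ring this says that the entries of `y` generate an ideal of grade `≥ n`. -/
def KoszulAcyclic (y : Fin n → R) : Prop :=
  ∀ k < n, ∀ w ∈ ⋀[R]^k (Fin n → R), ι R y * w = 0 → ∃ v, w = ι R y * v

theorem exists_eq_ι_mul_of_tailPart_eq {y : Fin (n + 1) → R} (hy : KoszulAcyclic (Fin.tail y))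
    {k : ℕ} (hk : k ≤ n) {w : ExteriorAlgebra R (Fin (n + 1) → R)}
    (hw : w ∈ ⋀[R]^k (Fin (n + 1) → R)) (hyw : ι R y * w = 0)
    (htail : ∃ s, tailPart R n w = ι R (Fin.tail y) * s) : ∃ v, w = ι R y * v := by
  obtain ⟨s, hs⟩ := htail
  have hdecomp := consZero_tailPart_add w
  have htail_mem : ι R (Fin.tail y) * s ∈ ⋀[R]^k (Fin n → R) :=
    hs ▸ map_mem_exteriorPower _ hw
  rcases k with _ | k
  · have hhead : headPart R n w = 0 := by
      rw [headPart, LinearMap.comp_apply, contractLeft_eq_zero_of_mem_exteriorPower_zero _ hw,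
        map_zero]
    rw [hs, ι_mul_eq_zero_of_mem_exteriorPower_zero _ htail_mem, hhead] at hdecomp
    exact ⟨0, by simpa using hdecomp.symm⟩
  obtain ⟨t, ht, hst⟩ := exists_mem_exteriorPower_ι_mul_eq _ htail_mem
  rw [hst] at hs
  have hcycle : ι R (Fin.tail y) * (headPart R n w - y 0 • t) = 0 := by
    rw [mul_sub, mul_smul_comm, ← hs, ι_tail_mul_headPart_of_ι_mul_eq_zero hyw, sub_self]
  obtain ⟨r, hr⟩ := hy k hk _ (sub_mem (headPart_mem_exteriorPower hw)
    (Submodule.smul_mem _ _ ht)) hcycle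
  refine ⟨consZero R n t - ι R (Pi.single 0 1) * consZero R n r, ?_⟩
  rw [sub_eq_iff_eq_add] at hr
  rw [← hdecomp, hs, hr, ι_eq_consZero_add y]
  simp only [map_add, map_mul, map_smul, add_mul, mul_add, mul_sub, smul_mul_assoc, mul_smul_comm,
    ι_mul_ι_mul_self, consZero_ι_mul_ι_mul_swap, smul_zero]
  abel

theorem KoszulAcyclic.cons {y : Fin (n + 1) → R} (hy : KoszulAcyclic (Fin.tail y))
    (hreg : ∀ c, y 0 * c ∈ Ideal.span (Set.range (Fin.tail y)) →
      c ∈ Ideal.span (Set.range (Fin.tail y))) : KoszulAcyclic y := by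
  intro k hk w hw hyw
  have htail_cycle : ι R (Fin.tail y) * tailPart R n w = 0 := by
    rw [← tailPart_ι_mul, hyw, map_zero]
  refine exists_eq_ι_mul_of_tailPart_eq hy (Nat.lt_succ_iff.1 hk) hw hyw ?_
  rcases (Nat.lt_succ_iff.1 hk).lt_or_eq with hlt | rfl
  · exact hy k hlt _ (map_mem_exteriorPower _ hw) htail_cycle
  · refine exists_eq_ι_mul_of_topCoeff_mem_span (map_mem_exteriorPower _ hw) (hreg _ ?_)
    rw [← smul_eq_mul, ← map_smul, ← ι_tail_mul_headPart_of_ι_mul_eq_zero hyw]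
    exact topCoeff_ι_mul_mem_span _ _

theorem KoszulAcyclic.of_isEmpty (y : Fin 0 → R) : KoszulAcyclic y :=
  fun _ hk => absurd hk (Nat.not_lt_zero _)

end Koszul

section VariableFamily

universe u

variable {σ τ : Type} {R : Type u} [CommRing R]

/-- `z` is a family of independent variables of `R`: some isomorphism from a polynomial ring over
some coefficient ring to `R` carries the variables to `z`. Any other variables of `R` are absorbed
in the coefficient ring. -/
def IsVariableFamily (z : σ → R) : Prop :=
  ∃ (B : Type u) (_ : CommRing B) (e : MvPolynomial σ B ≃+* R), ∀ s, e (X s) = z s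

namespace IsVariableFamily

theorem comp_injective {z : σ → R} (hz : IsVariableFamily z) {f : τ → σ}
    (hf : Function.Injective f) : IsVariableFamily (z ∘ f) := by
  classical
  obtain ⟨B, _, e, he⟩ := hz
  let split : τ ⊕ ((Set.range f)ᶜ : Set σ) ≃ σ :=
    ((Equiv.ofInjective f hf).sumCongr (Equiv.refl _)).trans (Equiv.Set.sumCompl (Set.range f))
  refine ⟨MvPolynomial ((Set.range f)ᶜ : Set σ) B, inferInstance,
    ((sumRingEquiv B τ _).symm.trans (renameEquiv B split).toRingEquiv).trans e, fun t => ?_⟩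
  rw [Function.comp_apply, ← he]
  simp only [RingEquiv.trans_apply, sumRingEquiv_symm_X]
  simp [split]

theorem exists_polynomialEquiv {z : σ → R} (hz : IsVariableFamily z) (s : σ) :
    ∃ (A : Type u) (_ : CommRing A) (e : Polynomial A ≃+* R) (z' : {t // t ≠ s} → A),
      e Polynomial.X = z s ∧ (∀ t, e (Polynomial.C (z' t)) = z t) := by
  classical
  obtain ⟨B, _, e, he⟩ := hz
  let φ : Polynomial (MvPolynomial {t // t ≠ s} B) ≃ₐ[B] MvPolynomial σ B :=
    (optionEquivLeft B _).symm.trans (renameEquiv B (Equiv.optionSubtypeNe s))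
  have hφX : φ Polynomial.X = X s := by simp [φ]
  have hφC : ∀ t, φ (Polynomial.C (X t)) = X t.1 := by simp [φ]
  refine ⟨MvPolynomial {t // t ≠ s} B, inferInstance, φ.toRingEquiv.trans e, X,
    (congrArg e hφX).trans (he s), fun t => (congrArg e (hφC t)).trans (he t)⟩

theorem exists_killing_ringHom {z : σ → R} (hz : IsVariableFamily z) (T : Set σ) :
    ∃ ρ : R →+* R, (∀ s ∉ T, ρ (z s) = z s) ∧ (∀ r, r - ρ r ∈ Ideal.span (z '' T)) ∧
      ∀ r ∈ Ideal.span (z '' T), ρ r = 0 := by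
  classical
  obtain ⟨B, _, e, he⟩ := hz
  let φ : MvPolynomial σ B →+* R :=
    eval₂Hom ((e : MvPolynomial σ B →+* R).comp C) fun s => if s ∈ T then 0 else z s
  have hφX : ∀ s, φ (X s) = if s ∈ T then 0 else z s := fun s => eval₂Hom_X' _ _ s
  have hφC : ∀ b, φ (C b) = e (C b) := fun b => eval₂Hom_C _ _ b
  have hsub : ∀ p, e p - φ p ∈ Ideal.span (z '' T) := fun p => by
    induction p using MvPolynomial.induction_on with
    | C b => rw [hφC, sub_self]; exact zero_mem _
    | add p q hp hq => rw [map_add, map_add, add_sub_add_comm]; exact add_mem hp hq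
    | mul_X p s hp =>
      rw [map_mul, map_mul, he, hφX]
      split_ifs with hs
      · rw [mul_zero, sub_zero]
        exact Ideal.mul_mem_left _ _ (Ideal.subset_span ⟨s, hs, rfl⟩)
      · rw [← sub_mul]
        exact Ideal.mul_mem_right _ _ hp
  have hsymm : ∀ s, e.symm (z s) = X s := fun s => by rw [← he, e.symm_apply_apply]
  let ρ : R →+* R := φ.comp (e.symm : R →+* MvPolynomial σ B)
  have hρ : ∀ s, ρ (z s) = if s ∈ T then 0 else z s := fun s => by
    rw [← hφX, ← hsymm]
    rfl
  have hker : Ideal.span (z '' T) ≤ RingHom.ker ρ := by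
    rw [Ideal.span_le]
    rintro _ ⟨s, hs, rfl⟩
    exact (hρ s).trans (if_pos hs)
  refine ⟨ρ, fun s hs => (hρ s).trans (if_neg hs), fun r => ?_, fun r hr => hker hr⟩
  simpa [ρ] using hsub (e.symm r)

theorem mem_nonZeroDivisors {z : σ → R} (hz : IsVariableFamily z) (s : σ) :
    z s ∈ nonZeroDivisors R := by
  obtain ⟨B, _, e, he⟩ := hz
  refine mem_nonZeroDivisors_of_injective e.symm.injective ?_
  rw [← he, e.symm_apply_apply]
  exact (isRegular_X (n := s)).mem_nonZeroDivisors

theorem koszulAcyclic {n : ℕ} {y : Fin n → R} (hy : IsVariableFamily y) : KoszulAcyclic y := by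
  induction n with
  | zero => exact .of_isEmpty y
  | succ n ih =>
    refine (ih (hy.comp_injective (Fin.succ_injective n))).cons fun c hc => ?_
    obtain ⟨ρ, hfix, hsub, hker⟩ := hy.exists_killing_ringHom (Set.range Fin.succ)
    rw [← Set.range_comp] at hsub hker
    have hρc : y 0 * ρ c = 0 := by
      rw [← hker _ hc, map_mul, hfix 0 (by simp)]
    rw [mul_left_mem_nonZeroDivisors_eq_zero_iff (hy.mem_nonZeroDivisors 0)] at hρc
    have hc' := hsub c
    rwa [hρc, sub_zero] at hc'

/-- Substituting `x_ij + δ_ij T` for `x_ij` turns the determinant into a monic polynomial in `T`. -/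
theorem det_mem_nonZeroDivisors {m : ℕ} {A : Matrix (Fin m) (Fin m) R}
    (hA : IsVariableFamily fun p : Fin m × Fin m => A p.1 p.2) : A.det ∈ nonZeroDivisors R := by
  obtain ⟨B, _, e, he⟩ := hA
  let φ : MvPolynomial (Fin m × Fin m) B →+* Polynomial (MvPolynomial (Fin m × Fin m) B) :=
    eval₂Hom (Polynomial.C.comp C) fun p =>
      Polynomial.C (X p) + (1 : Matrix (Fin m) (Fin m) _) p.1 p.2 * Polynomial.X
  have hφ : Function.LeftInverse (Polynomial.evalRingHom 0) φ := by
    refine fun p => RingHom.congr_fun (f := (Polynomial.evalRingHom 0).comp φ) (g := .id _) ?_ p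
    ext <;> simp [φ]
  let ψ := φ.comp (e.symm : R →+* MvPolynomial (Fin m × Fin m) B)
  have hψ : Function.Injective ψ := hφ.injective.comp e.symm.injective
  have hψA : ψ.mapMatrix A = (-mvPolynomialX (Fin m) (Fin m) B).charmatrix := by
    ext1 i j
    have hij : e.symm (A i j) = X (i, j) := e.symm_apply_eq.2 (he (i, j)).symm
    simp only [RingHom.mapMatrix_apply, Matrix.map_apply, ψ, RingHom.comp_apply, RingHom.coe_coe,
      hij, φ, coe_eval₂Hom, eval₂_X]
    by_cases h : i = j
    · subst h
      simp [add_comm]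
    · simp [h]
  refine mem_nonZeroDivisors_of_injective hψ ?_
  rw [RingHom.map_det, hψA]
  exact (Matrix.charpoly_monic _).mem_nonZeroDivisors

end IsVariableFamily

end VariableFamily

section GenericMatrix

universe u

variable {R : Type u} [CommRing R] {m n : ℕ}

/-- The entries of the matrix `X` and of the column `y` together are independent variables. -/
def IsGenericPair (X : Matrix (Fin m) (Fin n) R) (y : Fin n → R) : Prop :=
  IsVariableFamily (Sum.elim (fun p : Fin m × Fin n => X p.1 p.2) y)

namespace IsGenericPair

theorem submatrix {X : Matrix (Fin m) (Fin n) R} {y : Fin n → R} (h : IsGenericPair X y)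
    {k l : ℕ} {f : Fin k → Fin m} {g : Fin l → Fin n} (hf : Function.Injective f)
    (hg : Function.Injective g) : IsGenericPair (X.submatrix f g) (y ∘ g) := by
  have hfamily : Sum.elim (fun p : Fin k × Fin l => X.submatrix f g p.1 p.2) (y ∘ g) =
      Sum.elim (fun p : Fin m × Fin n => X p.1 p.2) y ∘ Sum.map (Prod.map f g) g := by
    ext (p | j) <;> rfl
  rw [IsGenericPair, hfamily]
  exact h.comp_injective ((hf.prodMap hg).sumMap hg)

theorem column {X : Matrix (Fin m) (Fin n) R} {y : Fin n → R} (h : IsGenericPair X y) :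
    IsVariableFamily y :=
  h.comp_injective Sum.inr_injective

theorem matrix {X : Matrix (Fin m) (Fin n) R} {y : Fin n → R} (h : IsGenericPair X y) :
    IsVariableFamily fun p : Fin m × Fin n => X p.1 p.2 :=
  h.comp_injective Sum.inl_injective

end IsGenericPair

theorem mulVec_eq_smul_col_add (X : Matrix (Fin m) (Fin (n + 1)) R) (y : Fin (n + 1) → R) :
    X *ᵥ y = y 0 • X.col 0 + X.submatrix id Fin.succ *ᵥ Fin.tail y := by
  ext i
  simp only [mulVec, dotProduct, Fin.sum_univ_succ, Pi.add_apply, Pi.smul_apply, smul_eq_mul,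
    col_apply, submatrix_apply, id_eq, Fin.tail, mul_comm]

theorem ι_col_zero_mul_ι_mul (X : Matrix (Fin m) (Fin (n + 1)) R) (y : Fin (n + 1) → R)
    (s : ExteriorAlgebra R (Fin m → R)) :
    ι R (X.col 0) * (ι R (X.submatrix id Fin.succ *ᵥ Fin.tail y) * s) =
      -(ι R (X *ᵥ y) * (ι R (X.col 0) * s)) := by
  rw [mulVec_eq_smul_col_add, map_add, map_smul, add_mul, smul_mul_assoc, ι_mul_ι_mul_self,
    smul_zero, zero_add, ι_mul_ι_mul_swap]

/-- The syzygy `d` is the relation `y₀ f = ∑ aᵢ gᵢ` reduced modulo `y₀`. -/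
theorem IsGenericPair.exists_syzygy_of_column_zero_mul_mem {X : Matrix (Fin m) (Fin (n + 1)) R}
    {y : Fin (n + 1) → R} (h : IsGenericPair X y) {f : R}
    (hf : y 0 * f ∈ Ideal.span (Set.range (X *ᵥ y))) :
    ∃ d : Module.Dual R (Fin m → R), d (X.submatrix id Fin.succ *ᵥ Fin.tail y) = 0 ∧
      f - d (X.col 0) ∈ Ideal.span (Set.range (X *ᵥ y)) := by
  obtain ⟨a, ha⟩ := (Submodule.mem_span_range_iff_exists_fun R).1 hf
  obtain ⟨ρ, hfix, hsub, hker⟩ := h.exists_killing_ringHom {Sum.inr 0}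
  rw [Set.image_singleton] at hsub hker
  simp only [Sum.elim_inr, Ideal.mem_span_singleton'] at hsub hker
  choose b hb using fun i => hsub (a i)
  let d : Module.Dual R (Fin m → R) := Fintype.linearCombination R fun i => ρ (a i)
  have hd : ∀ v, d v = ∑ i, v i * ρ (a i) := fun v => Fintype.linearCombination_apply R _ v
  have hρX : ∀ i j, ρ (X i j) = X i j := fun i j => hfix (Sum.inl (i, j)) (by simp)
  have hρy : ρ (y 0) = 0 := hker _ ⟨1, one_mul _⟩
  have hρtail : ∀ j, ρ (Fin.tail y j) = Fin.tail y j := fun j => hfix (Sum.inr j.succ) (by simp)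
  have hρg : ∀ i, ρ ((X *ᵥ y) i) = (X.submatrix id Fin.succ *ᵥ Fin.tail y) i := fun i => by
    rw [mulVec_eq_smul_col_add]
    simp [mulVec, dotProduct, hρX, hρy, hρtail]
  have hdtail : d (X.submatrix id Fin.succ *ᵥ Fin.tail y) = 0 := by
    have := congrArg ρ ha
    simpa [hρg, hρy, hd, mul_comm] using this
  have hdg : d (X *ᵥ y) = y 0 * d (X.col 0) := by
    rw [mulVec_eq_smul_col_add, map_add, map_smul, hdtail, add_zero, smul_eq_mul]
  have hfeq : f - d (X.col 0) = ∑ i, b i * (X *ᵥ y) i := by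
    rw [← sub_eq_zero, ← mul_left_mem_nonZeroDivisors_eq_zero_iff (h.column.mem_nonZeroDivisors 0),
      mul_sub, mul_sub, ← ha, ← hdg, hd, Finset.mul_sum, ← Finset.sum_sub_distrib,
      ← Finset.sum_sub_distrib]
    refine Finset.sum_eq_zero fun i _ => ?_
    rw [smul_eq_mul]
    linear_combination (X *ᵥ y) i * (hb i).symm
  refine ⟨d, hdtail, ?_⟩
  rw [hfeq]
  exact sum_mem fun i _ => Ideal.mul_mem_left _ _ (Ideal.subset_span (Set.mem_range_self i))

theorem IsGenericPair.mem_span_of_column_zero_mul_mem {X : Matrix (Fin m) (Fin (n + 1)) R}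
    {y : Fin (n + 1) → R} (h : IsGenericPair X y)
    (hX : KoszulAcyclic (X.submatrix id Fin.succ *ᵥ Fin.tail y)) {f : R}
    (hf : y 0 * f ∈ Ideal.span (Set.range (X *ᵥ y))) : f ∈ Ideal.span (Set.range (X *ᵥ y)) := by
  obtain ⟨d, hd, hfd⟩ := h.exists_syzygy_of_column_zero_mul_mem hf
  obtain ⟨s, hs⟩ : ∃ s, contractLeft d (volume R m) =
      ι R (X.submatrix id Fin.succ *ᵥ Fin.tail y) * s := by
    rcases m with _ | m
    · exact ⟨0, by rw [contractLeft_eq_zero_of_mem_exteriorPower_zero d volume_mem_exteriorPower,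
        mul_zero]⟩
    · exact hX m m.lt_succ_self _ (contractLeft_mem_exteriorPower d volume_mem_exteriorPower)
        (by rw [ι_mul_contractLeft_volume, hd, zero_smul])
  have hcol : d (X.col 0) ∈ Ideal.span (Set.range (X *ᵥ y)) := by
    rw [← topCoeff_ι_mul_contractLeft_volume, hs, ι_col_zero_mul_ι_mul, map_neg]
    exact neg_mem (topCoeff_ι_mul_mem_span _ _)
  rw [← sub_add_cancel f (d (X.col 0))]
  exact add_mem hfd hcol

theorem topCoeff_ι_col_zero_mul_map_volume (X : Matrix (Fin (n + 1)) (Fin (n + 1)) R) :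
    topCoeff R (n + 1) (ι R (X.col 0) *
      ExteriorAlgebra.map (X.submatrix id Fin.succ).mulVecLin (volume R n)) = X.det := by
  have hcons : ExteriorAlgebra.map (X.submatrix id Fin.succ).mulVecLin =
      (ExteriorAlgebra.map X.mulVecLin).comp (consZero R n) := by
    rw [consZero, map_comp_map]
    congr 1
    ext i j
    simp [mulVec, dotProduct, Fin.sum_univ_succ]
  have hcol : X.col 0 = X.mulVecLin (Pi.single 0 1) := by simp
  rw [hcons, hcol, ← map_apply_ι, AlgHom.comp_apply, ← map_mul, ← volume_succ,
    topCoeff_map X volume_mem_exteriorPower, topCoeff_volume, mul_one]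

/-- For an `(n + 1) × n` matrix `X`, the Koszul cycles of `g = Xy` in exterior degree `n` are,
modulo boundaries, the multiples of the vector of maximal minors of `X`. -/
def CyclesSpannedByMinors (X : Matrix (Fin (n + 1)) (Fin n) R) (y : Fin n → R) : Prop :=
  ∀ u ∈ ⋀[R]^n (Fin (n + 1) → R), ι R (X *ᵥ y) * u = 0 →
    ∃ s, ∃ c : R, u = ι R (X *ᵥ y) * s + c • ExteriorAlgebra.map X.mulVecLin (volume R n)

theorem IsGenericPair.mem_sup_span_det_of_column_zero_mul_mem
    {X : Matrix (Fin (n + 1)) (Fin (n + 1)) R} {y : Fin (n + 1) → R} (h : IsGenericPair X y)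
    (hX : CyclesSpannedByMinors (X.submatrix id Fin.succ) (Fin.tail y)) {f : R}
    (hf : y 0 * f ∈ Ideal.span (Set.range (X *ᵥ y))) :
    f ∈ Ideal.span (Set.range (X *ᵥ y)) ⊔ Ideal.span {X.det} := by
  obtain ⟨d, hd, hfd⟩ := h.exists_syzygy_of_column_zero_mul_mem hf
  obtain ⟨s, c, hs⟩ := hX _ (contractLeft_mem_exteriorPower d volume_mem_exteriorPower)
    (by rw [ι_mul_contractLeft_volume, hd, zero_smul])
  have hcol : d (X.col 0) ∈ Ideal.span (Set.range (X *ᵥ y)) ⊔ Ideal.span {X.det} := by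
    rw [← topCoeff_ι_mul_contractLeft_volume, hs, mul_add, ι_col_zero_mul_ι_mul, mul_smul_comm,
      map_add, map_neg, map_smul, topCoeff_ι_col_zero_mul_map_volume]
    exact Submodule.add_mem_sup (neg_mem (topCoeff_ι_mul_mem_span _ _))
      (Ideal.mul_mem_left _ _ (Ideal.mem_span_singleton_self _))
  rw [← sub_add_cancel f (d (X.col 0))]
  exact add_mem (Ideal.mem_sup_left hfd) hcol

theorem mem_map_C_of_linear_mul_mem {A : Type*} [CommRing A] {J I : Ideal A} {a b : A}
    (ha : ∀ c, a * c ∈ J → c ∈ I) (hb : ∀ c ∈ I, b * c ∈ J) {f : Polynomial A}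
    (hf : (Polynomial.C a * Polynomial.X + Polynomial.C b) * f ∈ J.map Polynomial.C) :
    f ∈ I.map Polynomial.C := by
  rw [Ideal.mem_map_C_iff] at hf ⊢
  have hcoeff : ∀ k, f.coeff (k + 1) ∈ I → f.coeff k ∈ I := fun k hk => by
    have hk' := hf (k + 1)
    rw [add_mul, Polynomial.coeff_add, mul_assoc, Polynomial.coeff_C_mul,
      Polynomial.coeff_X_mul, Polynomial.coeff_C_mul] at hk'
    exact ha _ ((J.add_mem_iff_left (hb _ hk)).1 hk')
  have hdegree : f.coeff (f.natDegree + 1) ∈ I := by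
    rw [Polynomial.coeff_eq_zero_of_natDegree_lt f.natDegree.lt_succ_self]
    exact I.zero_mem
  intro k
  rcases le_or_gt k (f.natDegree + 1) with hk | hk
  · exact Nat.decreasingInduction' (P := fun k => f.coeff k ∈ I)
      (fun l _ _ => hcoeff l) hk hdegree
  · rw [Polynomial.coeff_eq_zero_of_natDegree_lt (Nat.lt_of_succ_lt hk)]
    exact I.zero_mem

theorem mem_map_of_linear_mul_mem {A : Type*} [CommRing A] (e : Polynomial A ≃+* R)
    {φ : A →+* R} (hφ : ∀ c, φ c = e (Polynomial.C c)) {J I : Ideal A} {a b : A}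
    (ha : ∀ c, φ a * c ∈ J.map φ → c ∈ I.map φ) (hb : ∀ c ∈ I.map φ, φ b * c ∈ J.map φ) {f : R}
    (hf : (φ a * e Polynomial.X + φ b) * f ∈ J.map φ) : f ∈ I.map φ := by
  have hmem : ∀ (L : Ideal A) (p : Polynomial A), e p ∈ L.map φ ↔ p ∈ L.map Polynomial.C :=
    fun L p => by
      rw [show φ = (e : Polynomial A →+* R).comp Polynomial.C from RingHom.ext hφ,
        ← Ideal.map_map]
      change e p ∈ (L.map Polynomial.C).map e ↔ _
      rw [← Ideal.comap_symm, Ideal.mem_comap, e.symm_apply_apply]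
  have hmemC : ∀ (L : Ideal A) (c : A), φ c ∈ L.map φ ↔ c ∈ L := fun L c => by
    rw [hφ, hmem, Ideal.mem_map_C_iff]
    refine ⟨fun h => by simpa using h 0, fun h k => ?_⟩
    rw [Polynomial.coeff_C]
    split_ifs
    exacts [h, L.zero_mem]
  obtain ⟨p, rfl⟩ := e.surjective f
  rw [hφ, hφ, ← map_mul, ← map_add, ← map_mul, hmem] at hf
  rw [hmem]
  refine mem_map_C_of_linear_mul_mem (fun c hc => ?_) (fun c hc => ?_) hf
  · rw [← hmemC, map_mul] at hc
    exact (hmemC I c).1 (ha _ hc)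
  · rw [← hmemC] at hc
    rw [← hmemC, map_mul]
    exact hb _ hc

theorem IsGenericPair.exists_polynomialEquiv_entry {X : Matrix (Fin (m + 1)) (Fin (n + 1)) R}
    {y : Fin (n + 1) → R} (h : IsGenericPair X y) :
    ∃ (A : Type u) (_ : CommRing A) (e : Polynomial A ≃+* R) (φ : A →+* R)
      (X' : Matrix (Fin m) (Fin (n + 1)) A) (y' : Fin (n + 1) → A) (b : A),
      (∀ c, φ c = e (Polynomial.C c)) ∧ X'.map φ = X.submatrix Fin.succ id ∧ φ ∘ y' = y ∧
      (X *ᵥ y) 0 = φ (y' 0) * e Polynomial.X + φ b ∧ φ b ∈ Ideal.span (Set.range y) := by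
  obtain ⟨A, _, e, z, hX, hC⟩ := IsVariableFamily.exists_polynomialEquiv h (Sum.inl (0, 0))
  refine ⟨A, _, e, (e : Polynomial A →+* R).comp Polynomial.C,
    fun i j => z ⟨Sum.inl (i.succ, j), by simp⟩, fun j => z ⟨Sum.inr j, by simp⟩,
    ∑ j : Fin n, z ⟨Sum.inl (0, j.succ), by simp⟩ * z ⟨Sum.inr j.succ, by simp⟩,
    fun c => rfl, ?_, ?_, ?_, ?_⟩
  · ext i j
    exact hC _
  · ext j
    exact hC _
  · simp only [map_sum, map_mul, RingHom.comp_apply, RingHom.coe_coe, hC, hX]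
    simp [mulVec, dotProduct, Fin.sum_univ_succ, mul_comm]
  · simp only [map_sum, map_mul, RingHom.comp_apply, RingHom.coe_coe, hC]
    exact sum_mem fun j _ => Ideal.mul_mem_left _ _
      (Ideal.subset_span (Set.mem_range_self j.succ))

theorem map_span_range_mulVec {A : Type*} [CommRing A] (φ : A →+* R) (X : Matrix (Fin m) (Fin n) A)
    (y : Fin n → A) : (Ideal.span (Set.range (X *ᵥ y))).map φ =
      Ideal.span (Set.range (X.map φ *ᵥ (φ ∘ y))) := by
  rw [Ideal.map_span, ← Set.range_comp]
  congr 2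
  ext i
  exact RingHom.map_mulVec φ X y i

theorem IsGenericPair.mem_span_of_row_zero_mul_mem
    {X : Matrix (Fin (m + 1)) (Fin (n + 1)) R} {y : Fin (n + 1) → R} (h : IsGenericPair X y)
    (hcol : KoszulAcyclic (X.submatrix Fin.succ Fin.succ *ᵥ Fin.tail y)) {f : R}
    (hf : (X *ᵥ y) 0 * f ∈ Ideal.span (Set.range (X.submatrix Fin.succ id *ᵥ y))) :
    f ∈ Ideal.span (Set.range (X.submatrix Fin.succ id *ᵥ y)) := by
  have hrows := h.submatrix (Fin.succ_injective m) Function.injective_id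
  obtain ⟨A, _, e, φ, X', y', b, hφ, hX', rfl, hrow, -⟩ := h.exists_polynomialEquiv_entry
  rw [← hX', ← map_span_range_mulVec, hrow] at hf
  rw [← hX', ← map_span_range_mulVec]
  refine mem_map_of_linear_mul_mem e hφ (fun c hc => ?_) (fun c hc => Ideal.mul_mem_left _ _ hc) hf
  rw [map_span_range_mulVec, hX'] at hc ⊢
  exact hrows.mem_span_of_column_zero_mul_mem hcol hc

theorem mulVec_apply_mem_span (X : Matrix (Fin m) (Fin n) R) (y : Fin n → R) (i : Fin m) :
    (X *ᵥ y) i ∈ Ideal.span (Set.range y) := by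
  rw [mulVec, dotProduct]
  exact sum_mem fun j _ => Ideal.mul_mem_left _ _ (Ideal.subset_span (Set.mem_range_self j))

/-- Cramer's rule. -/
theorem mul_det_mem_span_mulVec (X : Matrix (Fin n) (Fin n) R) {y : Fin n → R} {c : R}
    (hc : c ∈ Ideal.span (Set.range y)) : c * X.det ∈ Ideal.span (Set.range (X *ᵥ y)) := by
  obtain ⟨a, rfl⟩ := (Submodule.mem_span_range_iff_exists_fun R).1 hc
  have hcramer : ∀ j, y j * X.det = (X.adjugate *ᵥ (X *ᵥ y)) j := fun j => by
    rw [mulVec_mulVec, adjugate_mul, smul_mulVec, one_mulVec, Pi.smul_apply, smul_eq_mul, mul_comm]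
  simp only [Finset.sum_mul, smul_eq_mul, mul_assoc, hcramer]
  exact sum_mem fun j _ => Ideal.mul_mem_left _ _ (mulVec_apply_mem_span _ _ j)

theorem IsGenericPair.mem_sup_span_det_of_row_zero_mul_mem
    {X : Matrix (Fin (n + 2)) (Fin (n + 1)) R} {y : Fin (n + 1) → R} (h : IsGenericPair X y)
    (hcol : CyclesSpannedByMinors (X.submatrix Fin.succ Fin.succ) (Fin.tail y)) {f : R}
    (hf : (X *ᵥ y) 0 * f ∈ Ideal.span (Set.range (X.submatrix Fin.succ id *ᵥ y))) :
    f ∈ Ideal.span (Set.range (X.submatrix Fin.succ id *ᵥ y)) ⊔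
      Ideal.span {(X.submatrix Fin.succ id).det} := by
  have hrows := h.submatrix (Fin.succ_injective (n + 1)) Function.injective_id
  obtain ⟨A, _, e, φ, X', y', b, hφ, hX', rfl, hrow, hb⟩ := h.exists_polynomialEquiv_entry
  have hmap : (Ideal.span (Set.range (X' *ᵥ y')) ⊔ Ideal.span {X'.det}).map φ =
      Ideal.span (Set.range (X.submatrix Fin.succ id *ᵥ (φ ∘ y'))) ⊔
        Ideal.span {(X.submatrix Fin.succ id).det} := by
    rw [Ideal.map_sup, map_span_range_mulVec, hX', Ideal.map_span, Set.image_singleton,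
      RingHom.map_det, RingHom.mapMatrix_apply, hX']
  rw [hrow, ← hX', ← map_span_range_mulVec] at hf
  rw [← hmap]
  refine mem_map_of_linear_mul_mem e hφ (fun c hc => ?_) (fun c hc => ?_) hf
  · rw [map_span_range_mulVec, hX'] at hc
    rw [hmap]
    exact hrows.mem_sup_span_det_of_column_zero_mul_mem hcol hc
  · rw [hmap] at hc
    obtain ⟨a, ha, d, hd, rfl⟩ := Submodule.mem_sup.1 hc
    obtain ⟨r, rfl⟩ := Ideal.mem_span_singleton'.1 hd
    rw [map_span_range_mulVec, hX', mul_add, mul_left_comm]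
    exact add_mem (Ideal.mul_mem_left _ _ ha)
      (Ideal.mul_mem_left _ _ (mul_det_mem_span_mulVec _ hb))

theorem IsGenericPair.koszulAcyclic_mulVec {X : Matrix (Fin m) (Fin n) R} {y : Fin n → R}
    (h : IsGenericPair X y) (hmn : m ≤ n) : KoszulAcyclic (X *ᵥ y) := by
  induction m generalizing n with
  | zero => exact .of_isEmpty _
  | succ m ih =>
    obtain ⟨n, rfl⟩ := Nat.exists_eq_add_one_of_ne_zero (by lia : n ≠ 0)
    refine .cons (ih (h.submatrix (Fin.succ_injective m) Function.injective_id) (by lia))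
      fun f hf => h.mem_span_of_row_zero_mul_mem ?_ hf
    exact ih (h.submatrix (Fin.succ_injective m) (Fin.succ_injective n)) (by lia)

theorem ι_mulVec_mul_map (X : Matrix (Fin m) (Fin n) R) (y : Fin n → R)
    (u : ExteriorAlgebra R (Fin n → R)) : ι R (X *ᵥ y) * ExteriorAlgebra.map X.mulVecLin u =
      ExteriorAlgebra.map X.mulVecLin (ι R y * u) := by
  rw [map_mul, map_apply_ι, mulVecLin_apply]

theorem tailPart_map (X : Matrix (Fin (m + 1)) (Fin n) R) (u : ExteriorAlgebra R (Fin n → R)) :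
    tailPart R m (ExteriorAlgebra.map X.mulVecLin u) =
      ExteriorAlgebra.map (X.submatrix Fin.succ id).mulVecLin u := by
  rw [tailPart, ← AlgHom.comp_apply, map_comp_map]
  rfl

theorem IsGenericPair.cyclesSpannedByMinors {X : Matrix (Fin (n + 1)) (Fin n) R} {y : Fin n → R}
    (h : IsGenericPair X y) : CyclesSpannedByMinors X y := by
  induction n with
  | zero =>
    intro u hu _
    obtain ⟨r, rfl⟩ := Submodule.mem_one.1 hu
    exact ⟨0, r, by simp [volume, Algebra.algebraMap_eq_smul_one]⟩
  | succ n ih =>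
    intro u hu hgu
    have hrows := h.submatrix (Fin.succ_injective (n + 1)) Function.injective_id
    have hcol := ih (h.submatrix (Fin.succ_injective (n + 1)) (Fin.succ_injective n))
    have htail : (X *ᵥ y) 0 * topCoeff R (n + 1) (tailPart R (n + 1) u) ∈
        Ideal.span (Set.range (X.submatrix Fin.succ id *ᵥ y)) := by
      rw [← smul_eq_mul, ← map_smul, ← ι_tail_mul_headPart_of_ι_mul_eq_zero hgu]
      exact topCoeff_ι_mul_mem_span _ _
    obtain ⟨a, ha, d, hd, had⟩ := Submodule.mem_sup.1
      (h.mem_sup_span_det_of_row_zero_mul_mem hcol htail)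
    obtain ⟨c, rfl⟩ := Ideal.mem_span_singleton'.1 hd
    set minors := ExteriorAlgebra.map X.mulVecLin (volume R (n + 1))
    have hcycle : ι R (X *ᵥ y) * (u - c • minors) = 0 := by
      rw [mul_sub, hgu, mul_smul_comm, ι_mulVec_mul_map, ι_mul_volume, map_zero, smul_zero,
        sub_zero]
    have hmem : u - c • minors ∈ ⋀[R]^(n + 1) (Fin (n + 2) → R) :=
      sub_mem hu (Submodule.smul_mem _ _ (map_mem_exteriorPower _ volume_mem_exteriorPower))
    have htop : topCoeff R (n + 1) (tailPart R (n + 1) (u - c • minors)) = a := by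
      rw [map_sub, map_sub, map_smul, map_smul, tailPart_map,
        topCoeff_map _ volume_mem_exteriorPower, topCoeff_volume, mul_one, ← had, smul_eq_mul,
        add_sub_cancel_right]
    obtain ⟨s, hs⟩ := exists_eq_ι_mul_of_tailPart_eq (y := X *ᵥ y)
      (hrows.koszulAcyclic_mulVec le_rfl) le_rfl hmem hcycle
      (exists_eq_ι_mul_of_topCoeff_mem_span (map_mem_exteriorPower _ hmem)
        (htop.symm ▸ ha))
    exact ⟨s, c, sub_eq_iff_eq_add.1 hs⟩

end GenericMatrix

section FreeResolution

variable {R N M : Type*} [CommRing R] [AddCommGroup N] [Module R N] [AddCommGroup M] [Module R M]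

theorem nonempty_prod_equiv {p : Submodule R M} {q : Submodule R N} {a b : ℕ}
    (hp : Nonempty (p ≃ₗ[R] (Fin a → R))) (hq : Nonempty (q ≃ₗ[R] (Fin b → R))) :
    Nonempty (p.prod q ≃ₗ[R] (Fin (a + b) → R)) := by
  obtain ⟨e⟩ := hp
  obtain ⟨f⟩ := hq
  let split : p.prod q ≃ₗ[R] p × q :=
    { toFun u := (⟨u.1.1, u.2.1⟩, ⟨u.1.2, u.2.2⟩)
      invFun u := ⟨(u.1, u.2), u.1.2, u.2.2⟩
      map_add' _ _ := rfl
      map_smul' _ _ := rfl }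
  exact ⟨split ≪≫ₗ e.prodCongr f ≪≫ₗ
    (LinearEquiv.sumArrowLequivProdArrow (Fin a) (Fin b) R R).symm ≪≫ₗ
    LinearEquiv.funCongrLeft R R finSumFinEquiv.symm⟩

theorem nonempty_bot_equiv : Nonempty ((⊥ : Submodule R M) ≃ₗ[R] (Fin 0 → R)) :=
  ⟨LinearEquiv.ofSubsingleton _ _⟩

theorem mem_smul_prod {I : Ideal R} {p : Submodule R M} {q : Submodule R N} {u : M × N}
    (hp : u.1 ∈ I • p) (hq : u.2 ∈ I • q) : u ∈ I • p.prod q := by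
  rw [LinearMap.prod_eq_sup_map, Submodule.smul_sup, ← Submodule.map_smul'',
    ← Submodule.map_smul'', ← LinearMap.prod_eq_sup_map]
  exact ⟨hp, hq⟩

theorem isMinimalFreeRes_of_linearEquiv {m : Ideal R} {β : ℕ → ℕ} {P : ℕ → Type*}
    [∀ k, AddCommGroup (P k)] [∀ k, Module R (P k)] (e : ∀ k, P k ≃ₗ[R] (Fin (β k) → R))
    (d : ∀ k, P (k + 1) →ₗ[R] P k) (ε : P 0 →ₗ[R] M) (hε : Function.Surjective ε)
    (hexact_zero : Function.Exact (d 0) ε) (hexact_succ : ∀ k, Function.Exact (d (k + 1)) (d k))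
    (hmin : ∀ k, LinearMap.range (d k) ≤ m • ⊤) : IsMinimalFreeRes m M β := by
  let f (k : ℕ) : (Fin (β (k + 1)) → R) →ₗ[R] (Fin (β k) → R) :=
    (e k).toLinearMap ∘ₗ d k ∘ₗ (e (k + 1)).symm.toLinearMap
  have hf : ∀ k, f k ∘ₗ (e (k + 1)).toLinearMap = (e k).toLinearMap ∘ₗ d k := fun k => by
    ext1 u
    simp [f]
  have hε' : (ε ∘ₗ (e 0).symm.toLinearMap) ∘ₗ (e 0).toLinearMap =
      (LinearEquiv.refl R M).toLinearMap ∘ₗ ε := by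
    ext1 u
    simp
  refine ⟨f, ε ∘ₗ (e 0).symm.toLinearMap, hε.comp (e 0).symm.surjective, ?_, fun k => ?_,
    fun k => ?_⟩
  · exact LinearMap.exact_iff.1 (.of_ladder_linearEquiv_of_exact (hf 0) hε' hexact_zero)
  · exact LinearMap.exact_iff.1
      (.of_ladder_linearEquiv_of_exact (hf (k + 1)) (hf k) (hexact_succ k))
  · calc LinearMap.range (f k) = (LinearMap.range (d k)).map (e k).toLinearMap := by
          rw [LinearMap.range_comp, LinearMap.range_comp_of_range_eq_top _ (LinearEquiv.range _)]
      _ ≤ (m • ⊤ : Submodule R (P k)).map (e k).toLinearMap := Submodule.map_mono (hmin k)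
      _ ≤ m • ⊤ := by
          rw [Submodule.map_smul'']
          exact Submodule.smul_mono le_rfl le_top

theorem isMinimalFreeRes_of_submodules {m : Ideal R} {β : ℕ → ℕ} (F : ℕ → Submodule R N)
    (d : N →ₗ[R] N) (ε : N →ₗ[R] M) (hβ : ∀ k, Nonempty (F k ≃ₗ[R] (Fin (β k) → R)))
    (hmin : ∀ k, (F (k + 1)).map d ≤ m • F k) (hε : (F 0).map ε = ⊤)
    (hexact_zero : ∀ u ∈ F 0, ε u = 0 ↔ u ∈ (F 1).map d)
    (hexact_succ : ∀ k, ∀ u ∈ F (k + 1), d u = 0 ↔ u ∈ (F (k + 2)).map d) :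
    IsMinimalFreeRes m M β := by
  have hmaps : ∀ k, ∀ u ∈ F (k + 1), d u ∈ F k := fun k u hu =>
    Submodule.smul_le_right (hmin k (Submodule.mem_map_of_mem hu))
  let r (k : ℕ) : F (k + 1) →ₗ[R] F k := d.restrict (hmaps k)
  refine isMinimalFreeRes_of_linearEquiv (fun k => (hβ k).some) r (ε ∘ₗ (F 0).subtype) ?_
    (fun u => ?_) (fun k u => ?_) fun k => ?_
  · rw [← LinearMap.range_eq_top, LinearMap.range_comp, Submodule.range_subtype, hε]
  · simp [hexact_zero u u.2, r, Subtype.ext_iff]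
  · simpa [r, Subtype.ext_iff] using hexact_succ k u u.2
  · rintro _ ⟨u, rfl⟩
    exact (Submodule.mem_smul_top_iff _ _ _).2 (hmin k (Submodule.mem_map_of_mem u.2))

end FreeResolution

section MappingCone

universe u

variable {R : Type u} [CommRing R] {m n : ℕ}

/-- The differential of the mapping cone of
`ΛX : (Λ(Rⁿ), y ∧ ·) → (Λ(Rᵐ), Xy ∧ ·)`, on the ungraded module `Λ(Rᵐ) × Λ(Rⁿ)`. -/
noncomputable def coneDifferential (X : Matrix (Fin m) (Fin n) R) (y : Fin n → R) :
    ExteriorAlgebra R (Fin m → R) × ExteriorAlgebra R (Fin n → R) →ₗ[R]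
      ExteriorAlgebra R (Fin m → R) × ExteriorAlgebra R (Fin n → R) :=
  ((LinearMap.mulLeft R (ι R (X *ᵥ y))).coprod (ExteriorAlgebra.map X.mulVecLin).toLinearMap).prod
    (-(LinearMap.mulLeft R (ι R y) ∘ₗ LinearMap.snd R _ _))

theorem coneDifferential_apply (X : Matrix (Fin m) (Fin n) R) (y : Fin n → R)
    (u : ExteriorAlgebra R (Fin m → R) × ExteriorAlgebra R (Fin n → R)) :
    coneDifferential X y u =
      (ι R (X *ᵥ y) * u.1 + ExteriorAlgebra.map X.mulVecLin u.2, -(ι R y * u.2)) := rfl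

theorem coneDifferential_coneDifferential (X : Matrix (Fin m) (Fin n) R) (y : Fin n → R)
    (u : ExteriorAlgebra R (Fin m → R) × ExteriorAlgebra R (Fin n → R)) :
    coneDifferential X y (coneDifferential X y u) = 0 := by
  simp only [coneDifferential_apply, mul_add, ι_mul_ι_mul_self, ι_mulVec_mul_map, map_neg, mul_neg,
    zero_add, add_neg_cancel, neg_zero, Prod.mk_zero_zero]

/-- The term in homological degree `k` of the mapping cone, for `m = n + 1`. The summand `Λ⁰(Rⁿ⁺¹)`
which would occur for `k = n + 1` is left out: it cancels against `Λ⁰(Rⁿ)` in degree `n + 2`. -/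
noncomputable def coneTerm (R : Type u) [CommRing R] (n k : ℕ) :
    Submodule R (ExteriorAlgebra R (Fin (n + 1) → R) × ExteriorAlgebra R (Fin n → R)) :=
  if k ≤ n then .prod (⋀[R]^(n - k + 1) (Fin (n + 1) → R)) (⋀[R]^(n - k + 2) (Fin n → R))
  else if k = n + 1 then .prod ⊥ (⋀[R]^1 (Fin n → R))
  else ⊥

/-- The rank of `coneTerm R n k`. -/
def coneRank (n k : ℕ) : ℕ :=
  if k ≤ n then (n + 1).choose (n - k + 1) + n.choose (n - k + 2) else if k = n + 1 then n else 0

theorem coneRank_eq (hn : 1 ≤ n) (k : ℕ) : coneRank n k =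
    if k = 0 then 1 else if k = 1 then n + 1 else if k = n + 1 then n
      else if k ≤ n then n.choose (k - 1) + n.choose (k - 2) + n.choose k else 0 := by
  rw [coneRank]
  rcases k with _ | _ | k
  · simp [Nat.choose_eq_zero_of_lt]
  · obtain ⟨p, rfl⟩ := Nat.exists_eq_add_of_le' hn
    simp
  · split_ifs with hk
    all_goals try lia
    have hsymm : n.choose (n - (k + 2) + 1) = n.choose (k + 1) ∧
        n.choose (n - (k + 2)) = n.choose (k + 2) ∧ n.choose (n - (k + 2) + 2) = n.choose k :=
      ⟨Nat.choose_symm_of_eq_add (by lia), Nat.choose_symm_of_eq_add (by lia),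
        Nat.choose_symm_of_eq_add (by lia)⟩
    change (n + 1).choose (n - (k + 2) + 1) + n.choose (n - (k + 2) + 2) =
      n.choose (k + 1) + n.choose k + n.choose (k + 2)
    rw [Nat.choose_succ_succ', hsymm.1, hsymm.2.1, hsymm.2.2]
    lia

theorem nonempty_coneTerm_equiv (n k : ℕ) :
    Nonempty (coneTerm R n k ≃ₗ[R] (Fin (coneRank n k) → R)) := by
  by_cases hle : k ≤ n
  · rw [coneTerm, coneRank, if_pos hle, if_pos hle]
    exact nonempty_prod_equiv (nonempty_exteriorPower_equiv (R := R) _ _)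
      (nonempty_exteriorPower_equiv (R := R) _ _)
  by_cases hlast : k = n + 1
  · rw [coneTerm, coneRank, if_neg hle, if_neg hle, if_pos hlast, if_pos hlast]
    have hequiv := nonempty_prod_equiv
      (nonempty_bot_equiv (M := ExteriorAlgebra R (Fin (n + 1) → R)))
      (nonempty_exteriorPower_equiv (R := R) n 1)
    rwa [zero_add, Nat.choose_one_right] at hequiv
  · rw [coneTerm, coneRank, if_neg hle, if_neg hle, if_neg hlast, if_neg hlast]
    exact nonempty_bot_equiv

theorem coneTerm_of_add_eq {k p : ℕ} (h : k + p = n) : coneTerm R n k =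
    .prod (⋀[R]^(p + 1) (Fin (n + 1) → R)) (⋀[R]^(p + 2) (Fin n → R)) := by
  rw [coneTerm, if_pos (by lia), show n - k = p by lia]

theorem coneTerm_add_one : coneTerm R n (n + 1) = .prod ⊥ (⋀[R]^1 (Fin n → R)) := by
  rw [coneTerm, if_neg (by lia), if_pos rfl]

theorem coneTerm_of_lt {k : ℕ} (h : n + 1 < k) : coneTerm R n k = ⊥ := by
  rw [coneTerm, if_neg (by lia), if_neg (by lia)]

theorem IsGenericPair.mem_span_of_mul_det_mem {X : Matrix (Fin n) (Fin n) R} {y : Fin n → R}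
    (h : IsGenericPair X y) {c : R} (hc : c * X.det ∈ Ideal.span (Set.range y)) :
    c ∈ Ideal.span (Set.range y) := by
  obtain ⟨ρ, hfix, hsub, hker⟩ := h.exists_killing_ringHom (Set.range Sum.inr)
  rw [← Set.range_comp, Sum.elim_comp_inr] at hsub hker
  have hρX : ρ.mapMatrix X = X := by
    ext i j
    exact hfix (Sum.inl (i, j)) (by simp)
  have hρc : ρ c * X.det = 0 := by
    rw [← hker _ hc, map_mul, RingHom.map_det, hρX]
  rw [mul_right_mem_nonZeroDivisors_eq_zero_iff h.matrix.det_mem_nonZeroDivisors] at hρc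
  simpa only [hρc, sub_zero] using hsub c

theorem IsGenericPair.exists_eq_ι_mul_of_cone_cycle {X : Matrix (Fin (n + 1)) (Fin n) R}
    {y : Fin n → R} (h : IsGenericPair X y) {v : ExteriorAlgebra R (Fin (n + 1) → R)}
    {w : ExteriorAlgebra R (Fin n → R)} {p : ℕ} (hw : w ∈ ⋀[R]^p (Fin n → R))
    (hyw : ι R y * w = 0) (hvw : ι R (X *ᵥ y) * v + ExteriorAlgebra.map X.mulVecLin w = 0) :
    ∃ w', w = ι R y * w' := by
  rcases lt_trichotomy p n with hp | rfl | hp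
  · exact h.column.koszulAcyclic p hp w hw hyw
  · have hrows : IsGenericPair (X.submatrix Fin.succ id) y :=
      h.submatrix (Fin.succ_injective p) Function.injective_id
    refine exists_eq_ι_mul_of_topCoeff_mem_span hw (hrows.mem_span_of_mul_det_mem ?_)
    have htop := congrArg (fun u => topCoeff R p (tailPart R p u)) hvw
    simp only [map_add, tailPart_ι_mul, tailPart_map, topCoeff_map _ hw, map_zero] at htop
    rw [mul_comm, ← Ideal.neg_mem_iff, ← eq_neg_of_add_eq_zero_left htop]
    exact topCoeff_ι_mul_mem (fun i => mulVec_apply_mem_span X y i.succ) _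
  · exact ⟨0, by rw [eq_zero_of_mem_exteriorPower_of_lt hp hw, mul_zero]⟩

theorem IsGenericPair.exists_eq_ι_mul_add_map {X : Matrix (Fin (n + 1)) (Fin n) R}
    {y : Fin n → R} (h : IsGenericPair X y) {p : ℕ} (hp : p ≤ n)
    {v : ExteriorAlgebra R (Fin (n + 1) → R)} (hv : v ∈ ⋀[R]^p (Fin (n + 1) → R))
    (hgv : ι R (X *ᵥ y) * v = 0) :
    ∃ s, ∃ w ∈ ⋀[R]^p (Fin n → R), ι R y * w = 0 ∧
      v = ι R (X *ᵥ y) * s + ExteriorAlgebra.map X.mulVecLin w := by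
  rcases hp.lt_or_eq with hlt | rfl
  · have hrows : KoszulAcyclic (Fin.tail (X *ᵥ y)) :=
      (h.submatrix (Fin.succ_injective n) Function.injective_id).koszulAcyclic_mulVec le_rfl
    obtain ⟨s, hs⟩ := exists_eq_ι_mul_of_tailPart_eq hrows hp hv hgv
      (hrows p hlt _ (map_mem_exteriorPower _ hv) (by rw [← tailPart_ι_mul, hgv, map_zero]))
    exact ⟨s, 0, zero_mem _, mul_zero _, by rw [map_zero, add_zero, hs]⟩
  · obtain ⟨s, c, hs⟩ := h.cyclesSpannedByMinors v hv hgv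
    exact ⟨s, c • volume R p, Submodule.smul_mem _ _ volume_mem_exteriorPower,
      by rw [mul_smul_comm, ι_mul_volume, smul_zero], by rw [map_smul, hs]⟩

theorem IsGenericPair.exists_cone_boundary {X : Matrix (Fin (n + 1)) (Fin n) R}
    {y : Fin n → R} (h : IsGenericPair X y) {p : ℕ} (hp : p < n)
    {v : ExteriorAlgebra R (Fin (n + 1) → R)} (hv : v ∈ ⋀[R]^(p + 1) (Fin (n + 1) → R))
    {w : ExteriorAlgebra R (Fin n → R)} (hw : w ∈ ⋀[R]^(p + 2) (Fin n → R))
    (hyw : ι R y * w = 0) (hvw : ι R (X *ᵥ y) * v + ExteriorAlgebra.map X.mulVecLin w = 0) :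
    ∃ s ∈ ⋀[R]^p (Fin (n + 1) → R), ∃ t ∈ ⋀[R]^(p + 1) (Fin n → R),
      coneDifferential X y (s, t) = (v, w) := by
  obtain ⟨w₁, hw₁⟩ := h.exists_eq_ι_mul_of_cone_cycle hw hyw hvw
  obtain ⟨w₀, hw₀, hw₁₀⟩ := exists_mem_exteriorPower_ι_mul_eq y (hw₁ ▸ hw)
  rw [hw₁₀] at hw₁
  have hcycle : ι R (X *ᵥ y) * (v + ExteriorAlgebra.map X.mulVecLin w₀) = 0 := by
    rw [mul_add, ι_mulVec_mul_map, ← hw₁, hvw]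
  obtain ⟨s₁, w₂, hw₂, hyw₂, hs₁⟩ := h.exists_eq_ι_mul_add_map hp
    (add_mem hv (map_mem_exteriorPower _ hw₀)) hcycle
  have hs₁_mem : ι R (X *ᵥ y) * s₁ ∈ ⋀[R]^(p + 1) (Fin (n + 1) → R) := by
    rw [← sub_eq_iff_eq_add] at hs₁
    rw [← hs₁]
    exact sub_mem (add_mem hv (map_mem_exteriorPower _ hw₀)) (map_mem_exteriorPower _ hw₂)
  obtain ⟨s, hs, hs₁s⟩ := exists_mem_exteriorPower_ι_mul_eq _ hs₁_mem
  refine ⟨s, hs, w₂ - w₀, sub_mem hw₂ hw₀, ?_⟩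
  rw [coneDifferential_apply, Prod.mk.injEq]
  constructor
  · rw [map_sub, ← hs₁s, ← add_sub_assoc, ← hs₁, add_sub_cancel_right]
  · rw [mul_sub, hyw₂, zero_sub, neg_neg, hw₁]

theorem exists_coneDifferential_zero_eq (X : Matrix (Fin m) (Fin n) R) (y : Fin n → R)
    {s : ExteriorAlgebra R (Fin m → R)} (hs : s ∈ ⋀[R]^0 (Fin m → R))
    {t : ExteriorAlgebra R (Fin n → R)} (ht : t ∈ ⋀[R]^1 (Fin n → R)) :
    ∃ t' ∈ ⋀[R]^1 (Fin n → R), coneDifferential X y (0, t') = coneDifferential X y (s, t) := by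
  obtain ⟨r, rfl⟩ := Submodule.mem_one.1 hs
  have hy : ι R y ∈ ⋀[R]^1 (Fin n → R) := by simp [exteriorPower]
  refine ⟨r • ι R y + t, add_mem (Submodule.smul_mem _ _ hy) ht, ?_⟩
  simp [coneDifferential_apply, Algebra.algebraMap_eq_smul_one, mul_add]

theorem IsGenericPair.eq_zero_of_map_eq_zero {X : Matrix (Fin (n + 1)) (Fin n) R}
    {y : Fin n → R} (h : IsGenericPair X y) {w : ExteriorAlgebra R (Fin n → R)}
    (hw : w ∈ ⋀[R]^1 (Fin n → R)) (hXw : ExteriorAlgebra.map X.mulVecLin w = 0) : w = 0 := by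
  obtain ⟨z, rfl⟩ : ∃ z, ι R z = w := by simpa [exteriorPower] using hw
  have hXz : X *ᵥ z = 0 := (ι_eq_zero_iff (R := R) _).1 (by simpa using hXw)
  have hdet : (X.submatrix Fin.succ id).det ∈ nonZeroDivisors R :=
    (h.submatrix (Fin.succ_injective n) Function.injective_id).matrix.det_mem_nonZeroDivisors
  have hz : z = 0 := eq_zero_of_det_mem_nonZeroDivisors_of_mulVec_eq_zero hdet
    (funext fun i => congrFun hXz i.succ)
  rw [hz, map_zero]

theorem map_coneDifferential_coneTerm_le {I : Ideal R} {X : Matrix (Fin (n + 1)) (Fin n) R}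
    {y : Fin n → R} (hX : ∀ i j, X i j ∈ I) (hy : ∀ j, y j ∈ I) (k : ℕ) :
    (coneTerm R n (k + 1)).map (coneDifferential X y) ≤ I • coneTerm R n k := by
  have hXI : ∀ z, X.mulVecLin z ∈ I • (⊤ : Submodule R (Fin (n + 1) → R)) := fun z =>
    mem_smul_top_of_forall_mem fun i =>
      show ∑ j, X i j * z j ∈ I from sum_mem fun j _ => I.mul_mem_right _ (hX i j)
  have hyI : y ∈ I • (⊤ : Submodule R (Fin n → R)) := mem_smul_top_of_forall_mem hy
  rintro _ ⟨⟨v, w⟩, hu, rfl⟩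
  rw [coneDifferential_apply]
  rcases lt_trichotomy k n with hk | rfl | hk
  · obtain ⟨p, rfl⟩ := Nat.exists_eq_add_of_lt hk
    rw [SetLike.mem_coe, coneTerm_of_add_eq (p := p) (by lia)] at hu
    rw [coneTerm_of_add_eq (p := p + 1) (by lia)]
    exact mem_smul_prod (add_mem (ι_mul_mem_smul_exteriorPower (hXI y) hu.1)
      (map_mem_smul_exteriorPower hXI hu.2)) (neg_mem (ι_mul_mem_smul_exteriorPower hyI hu.2))
  · rw [SetLike.mem_coe, coneTerm_add_one] at hu
    obtain ⟨rfl : v = 0, hw : w ∈ _⟩ := hu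
    rw [coneTerm_of_add_eq (p := 0) (by lia), mul_zero, zero_add]
    exact mem_smul_prod (by simpa using map_mem_smul_exteriorPower hXI hw)
      (neg_mem (ι_mul_mem_smul_exteriorPower hyI hw))
  · rw [SetLike.mem_coe, coneTerm_of_lt (by lia)] at hu
    obtain ⟨rfl, rfl⟩ := Prod.mk_eq_zero.1 hu
    simp only [mul_zero, map_zero, add_zero, neg_zero, Prod.mk_zero_zero, zero_mem]

/-- The augmentation of the mapping cone, which identifies `Λⁿ⁺¹(Rⁿ⁺¹)` with `R`. -/
noncomputable def coneAugmentation (X : Matrix (Fin (n + 1)) (Fin n) R) (y : Fin n → R) :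
    ExteriorAlgebra R (Fin (n + 1) → R) × ExteriorAlgebra R (Fin n → R) →ₗ[R]
      R ⧸ Ideal.span (Set.range (X *ᵥ y)) :=
  Submodule.mkQ _ ∘ₗ topCoeff R (n + 1) ∘ₗ LinearMap.fst R _ _

theorem map_coneAugmentation_coneTerm (X : Matrix (Fin (n + 1)) (Fin n) R) (y : Fin n → R) :
    (coneTerm R n 0).map (coneAugmentation X y) = ⊤ := by
  refine eq_top_iff.2 fun x _ => ?_
  obtain ⟨r, rfl⟩ := Submodule.mkQ_surjective _ x
  rw [coneTerm_of_add_eq (zero_add n)]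
  refine ⟨(r • volume R (n + 1), 0), ⟨Submodule.smul_mem _ _ volume_mem_exteriorPower,
    zero_mem _⟩, ?_⟩
  simp [coneAugmentation, topCoeff_volume]

theorem coneAugmentation_eq_zero_iff (hn : 1 ≤ n) (X : Matrix (Fin (n + 1)) (Fin n) R)
    (y : Fin n → R) {u : ExteriorAlgebra R (Fin (n + 1) → R) × ExteriorAlgebra R (Fin n → R)}
    (hu : u ∈ coneTerm R n 0) :
    coneAugmentation X y u = 0 ↔ u ∈ (coneTerm R n 1).map (coneDifferential X y) := by
  obtain ⟨p, rfl⟩ := Nat.exists_eq_add_of_le' hn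
  rw [coneTerm_of_add_eq (zero_add _)] at hu
  obtain ⟨v, w⟩ := u
  obtain ⟨hv : v ∈ _, hw : w ∈ _⟩ := hu
  obtain rfl := eq_zero_of_mem_exteriorPower_of_lt (by lia) hw
  have hzero : coneAugmentation X y (v, 0) = 0 ↔
      topCoeff R _ v ∈ Ideal.span (Set.range (X *ᵥ y)) := Submodule.Quotient.mk_eq_zero _
  rw [hzero, coneTerm_of_add_eq (add_comm 1 p)]
  constructor
  · intro hmem
    obtain ⟨s, hs⟩ := exists_eq_ι_mul_of_topCoeff_mem_span hv hmem
    obtain ⟨t, ht, hst⟩ := exists_mem_exteriorPower_ι_mul_eq _ (hs ▸ hv)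
    refine ⟨(t, 0), ⟨ht, zero_mem _⟩, ?_⟩
    rw [coneDifferential_apply, map_zero, add_zero, mul_zero, neg_zero, hs, hst]
  · rintro ⟨⟨s, t⟩, ⟨-, ht : t ∈ _⟩, hst⟩
    obtain rfl := eq_zero_of_mem_exteriorPower_of_lt (by lia) ht
    rw [coneDifferential_apply, map_zero, add_zero, Prod.mk.injEq] at hst
    rw [← hst.1]
    exact topCoeff_ι_mul_mem_span _ _

theorem IsGenericPair.coneDifferential_eq_zero_iff {X : Matrix (Fin (n + 1)) (Fin n) R}
    {y : Fin n → R} (h : IsGenericPair X y) {k : ℕ}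
    {u : ExteriorAlgebra R (Fin (n + 1) → R) × ExteriorAlgebra R (Fin n → R)}
    (hu : u ∈ coneTerm R n (k + 1)) :
    coneDifferential X y u = 0 ↔ u ∈ (coneTerm R n (k + 2)).map (coneDifferential X y) := by
  refine ⟨fun hdu => ?_, ?_⟩
  swap
  · rintro ⟨u, -, rfl⟩
    exact coneDifferential_coneDifferential X y u
  obtain ⟨v, w⟩ := u
  rw [coneDifferential_apply, Prod.mk_eq_zero, neg_eq_zero] at hdu
  rcases lt_trichotomy k n with hk | rfl | hk
  · obtain ⟨p, rfl⟩ := Nat.exists_eq_add_of_lt hk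
    rw [coneTerm_of_add_eq (p := p) (by lia)] at hu
    obtain ⟨s, hs, t, ht, hst⟩ := h.exists_cone_boundary (by lia) hu.1 hu.2 hdu.2 hdu.1
    rcases p with _ | p
    · obtain ⟨t', ht', hst'⟩ := exists_coneDifferential_zero_eq X y hs ht
      have hterm : coneTerm R (k + 0 + 1) (k + 2) = .prod ⊥ (⋀[R]^1 _) := coneTerm_add_one
      rw [hterm]
      exact ⟨(0, t'), ⟨zero_mem _, ht'⟩, hst'.trans hst⟩
    · rw [coneTerm_of_add_eq (p := p) (by lia)]
      exact ⟨(s, t), ⟨hs, ht⟩, hst⟩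
  · rw [coneTerm_add_one] at hu
    obtain ⟨rfl : v = 0, hw : w ∈ _⟩ := hu
    rw [mul_zero, zero_add] at hdu
    rw [h.eq_zero_of_map_eq_zero hw hdu.1]
    exact zero_mem _
  · rw [coneTerm_of_lt (by lia)] at hu
    rw [(Submodule.mem_bot R).1 hu]
    exact zero_mem _

theorem IsGenericPair.isMinimalFreeRes {X : Matrix (Fin (n + 1)) (Fin n) R} {y : Fin n → R}
    (h : IsGenericPair X y) (hn : 1 ≤ n) {I : Ideal R} (hX : ∀ i j, X i j ∈ I)
    (hy : ∀ j, y j ∈ I) :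
    IsMinimalFreeRes I (R ⧸ Ideal.span (Set.range (X *ᵥ y))) (coneRank n) :=
  isMinimalFreeRes_of_submodules (coneTerm R n) (coneDifferential X y) (coneAugmentation X y)
    (nonempty_coneTerm_equiv n) (map_coneDifferential_coneTerm_le hX hy)
    (map_coneAugmentation_coneTerm X y) (fun _ => coneAugmentation_eq_zero_iff hn X y)
    fun _ _ => h.coneDifferential_eq_zero_iff

end MappingCone

end BettiI1XY

open BettiI1XY in
theorem betti_numbers_I1XY_extra_row_general
    {K : Type*} [CommRing K] (n : ℕ) (hn : 1 ≤ n)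
    (Xv : Fin (n + 1) → Fin n → MvPolynomial ((Fin (n + 1) × Fin n) ⊕ Fin n) K)
    (yv : Fin n → MvPolynomial ((Fin (n + 1) × Fin n) ⊕ Fin n) K)
    (hX : ∀ i j, Xv i j = MvPolynomial.X (Sum.inl (i, j)))
    (hy : ∀ j, yv j = MvPolynomial.X (Sum.inr j))
    (g : Fin (n + 1) → MvPolynomial ((Fin (n + 1) × Fin n) ⊕ Fin n) K)
    (hg : ∀ i, g i = ∑ j, Xv i j * yv j) :
    IsMinimalFreeRes (Ideal.span (Set.range (MvPolynomial.X :
        ((Fin (n + 1) × Fin n) ⊕ Fin n) → MvPolynomial ((Fin (n + 1) × Fin n) ⊕ Fin n) K)))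
      (MvPolynomial ((Fin (n + 1) × Fin n) ⊕ Fin n) K ⧸ Ideal.span (Set.range g))
      (fun i => if i = 0 then 1 else if i = 1 then n + 1 else if i = n + 1 then n
        else if i ≤ n then n.choose (i - 1) + n.choose (i - 2) + n.choose i else 0) := by
  have hgeneric : IsGenericPair (Matrix.of Xv) yv :=
    ⟨K, inferInstance, RingEquiv.refl _, by rintro (⟨i, j⟩ | j) <;> simp [hX, hy]⟩
  obtain rfl : g = Matrix.of Xv *ᵥ yv := funext hg
  rw [← funext (coneRank_eq hn)]
  refine hgeneric.isMinimalFreeRes hn (fun i j => ?_) fun j => ?_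
  · exact Ideal.subset_span ⟨_, (hX i j).symm⟩
  · exact Ideal.subset_span ⟨_, (hy j).symm⟩

/-- With `X̂` the generic `(n+1)×n` matrix and `J = I₁(X̂Y) = ⟨g 1, …, g (n+1)⟩`, the
total Betti numbers of `R̂/J` are `β 0 = 1`, `β 1 = n+1`,
`β (k+1) = n.choose k + n.choose (k−1) + n.choose (k+1)` for `1 ≤ k < n`, and
`β (n+1) = n`. -/
theorem betti_numbers_I1XY_extra_row
    {K : Type*} [Field K] (n : ℕ) (hn : 1 ≤ n)
    (Xv : Fin (n + 1) → Fin n → MvPolynomial ((Fin (n + 1) × Fin n) ⊕ Fin n) K)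
    (yv : Fin n → MvPolynomial ((Fin (n + 1) × Fin n) ⊕ Fin n) K)
    (hX : ∀ i j, Xv i j = MvPolynomial.X (Sum.inl (i, j)))
    (hy : ∀ j, yv j = MvPolynomial.X (Sum.inr j))
    (g : Fin (n + 1) → MvPolynomial ((Fin (n + 1) × Fin n) ⊕ Fin n) K)
    (hg : ∀ i, g i = ∑ j, Xv i j * yv j) :
    IsMinimalFreeRes (Ideal.span (Set.range (MvPolynomial.X :
        ((Fin (n + 1) × Fin n) ⊕ Fin n) → MvPolynomial ((Fin (n + 1) × Fin n) ⊕ Fin n) K)))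
      (MvPolynomial ((Fin (n + 1) × Fin n) ⊕ Fin n) K ⧸ Ideal.span (Set.range g))
      (fun i => if i = 0 then 1 else if i = 1 then n + 1 else if i = n + 1 then n
        else if i ≤ n then n.choose (i - 1) + n.choose (i - 2) + n.choose i else 0) :=
  betti_numbers_I1XY_extra_row_general n hn Xv yv hX hy g hg
end
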